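/- There exists a constant c > 0 such that the following holds: for every graph H with n vertices, no isolated vertices, and vertex cover number τ = τ(H) ≥ 2, one has AR_s(H) ≤ AR_s(K(τ, n−τ)) ≤ c·n·τ⁵/log τ + c·τ⁶/log τ, where K(s,t) denotes the graph on s+t vertices obtained from the complete bipartite graph with parts S of size s and T of size t by adding all edges inside S. -/

import Mathlib

open SimpleGraph

/-- A proper edge coloring of `G`: adjacent (distinct, vertex-sharing) edges get
different colors. -/
def IsProperEdgeColoring {V : Type*} (G : SimpleGraph V) (c : Sym2 V → ℕ) : Prop :=
  ∀ e₁ ∈ G.edgeSet, ∀ e₂ ∈ G.edgeSet, e₁ ≠ e₂ → (∃ v, v ∈ e₁ ∧ v ∈ e₂) → c e₁ ≠ c e₂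

/-- `G` contains a rainbow copy of `H` with respect to the edge coloring `c`:
there is an injective graph homomorphism `H → G` whose image edges receive
pairwise distinct colors. -/
def HasRainbowCopy {V W : Type*} (G : SimpleGraph V) (H : SimpleGraph W) (c : Sym2 V → ℕ) : Prop :=
  ∃ f : H →g G, Function.Injective f ∧
    ∀ e₁ ∈ H.edgeSet, ∀ e₂ ∈ H.edgeSet, c (Sym2.map f e₁) = c (Sym2.map f e₂) → e₁ = e₂

/-- `G → H`: every proper edge coloring of `G` contains a rainbow copy of `H`. -/
def ArrowsTo {V W : Type*} (G : SimpleGraph V) (H : SimpleGraph W) : Prop :=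
  ∀ c : Sym2 V → ℕ, IsProperEdgeColoring G c → HasRainbowCopy G H c

/-- The size anti-Ramsey number: the minimum number of edges of a (finite) graph
`G` with `G → H`. -/
noncomputable def ARs {W : Type*} (H : SimpleGraph W) : ℕ :=
  sInf {m | ∃ (n : ℕ) (G : SimpleGraph (Fin n)), ArrowsTo G H ∧ G.edgeSet.ncard = m}

/-- The local anti-Ramsey number: the minimum `n` such that `K_n → H`. -/
noncomputable def ARloc {W : Type*} (H : SimpleGraph W) : ℕ :=
  sInf {n | ArrowsTo (⊤ : SimpleGraph (Fin n)) H}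

/-- The vertex cover number of `H`: the minimum size of a set of vertices
meeting every edge of `H`. -/
noncomputable def coverNumber {W : Type*} (H : SimpleGraph W) : ℕ :=
  sInf {m | ∃ S : Set W, S.Finite ∧ S.ncard = m ∧ ∀ e ∈ H.edgeSet, ∃ v ∈ S, v ∈ e}

/-- The graph `K(s,t)`: a complete bipartite graph with parts `S`, `T` of sizes
`s` and `t`, together with all edges inside `S`. -/
def Kst (s t : ℕ) : SimpleGraph (Fin s ⊕ Fin t) :=
  SimpleGraph.fromRel (fun v _ => v.isLeft = true)

/-!
Given a proper coloring of `K_m`, call the vertex set of two disjoint edges of equal color bad. The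
bad sets form a 4-uniform hypergraph in which, by properness, every triple lies in at most three of
them, and its independent sets span rainbow cliques. Such a hypergraph of bounded codegree has an
independent set of size `s` as soon as `m` exceeds a constant times `s³ / log s`: let `n` be about
`m ^ (4 / 11)`, slightly more than the `m ^ (1 / 3)` that a greedy choice would reach. For most
pairs of an `n`-set `Y` and a vertex `v ∉ Y`, the bad sets through `v` meet each other and the other
bad sets inside `Y ∪ {v}` in the simplest possible way, and then Harris' inequality bounds from
below the probability that `v` can be added to a random independent subset of `Y`. If all
independent sets were smaller than `s`, averaging over `Y` and `v` would contradict this bound.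

A rainbow `K_s` inside `K(m, N)` extends to a rainbow `K(s, t)` greedily: each of the `s` vertices
rules out at most one new vertex per color already used, so `N = s²(s + t)` suffices. Finally, a
minimum vertex cover of `H` embeds `H` into `K(τ, n - τ)`.
-/

section IndependentSets

open Finset

lemma exp_neg_two_mul_le_one_sub {q : ℝ} (h₀ : 0 ≤ q) (h₁ : q ≤ 1 / 2) :
    Real.exp (-2 * q) ≤ 1 - q := by
  rw [neg_mul, Real.exp_neg]
  refine inv_le_of_inv_le₀ (by linarith) ((inv_le_iff_one_le_mul₀ (by linarith)).2 ?_)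
  nlinarith [Real.add_one_le_exp (2 * q)]

lemma exp_neg_two_mul_sum_le_prod_one_sub {ι : Type*} {s : Finset ι} {q : ι → ℝ}
    (h₀ : ∀ i ∈ s, 0 ≤ q i) (h₁ : ∀ i ∈ s, q i ≤ 1 / 2) :
    Real.exp (-2 * ∑ i ∈ s, q i) ≤ ∏ i ∈ s, (1 - q i) := by
  rw [mul_sum, Real.exp_sum]
  exact prod_le_prod (fun _ _ => (Real.exp_pos _).le) fun i hi =>
    exp_neg_two_mul_le_one_sub (h₀ i hi) (h₁ i hi)

variable {V : Type*} [DecidableEq V]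

/-- The independent subsets of `Y`: those containing no member of the family `𝒬`, read as the
edge set of a hypergraph. -/
def indepSets (𝒬 : Finset (Finset V)) (Y : Finset V) : Finset (Finset V) :=
  Y.powerset.filter fun I => ∀ Q ∈ 𝒬, ¬ Q ⊆ I

variable {𝒬 : Finset (Finset V)} {I Y T F : Finset V} {v : V}

lemma mem_indepSets : I ∈ indepSets 𝒬 Y ↔ I ⊆ Y ∧ ∀ Q ∈ 𝒬, ¬ Q ⊆ I := by
  simp only [indepSets, mem_filter, mem_powerset]

lemma isLowerSet_indepSets (𝒬 : Finset (Finset V)) (Y : Finset V) :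
    IsLowerSet (indepSets 𝒬 Y : Set (Finset V)) := by
  intro A B hBA hA
  rw [mem_coe, mem_indepSets] at hA ⊢
  exact ⟨hBA.trans hA.1, fun Q hQ hQB => hA.2 Q hQ (hQB.trans hBA)⟩

lemma indepSets_union (𝒬 𝓛 : Finset (Finset V)) (Y : Finset V) :
    indepSets (𝒬 ∪ 𝓛) Y = indepSets 𝒬 Y ∩ indepSets 𝓛 Y := by
  ext I
  simp only [mem_inter, mem_indepSets, mem_union, or_imp, forall_and]
  tauto

lemma indepSets_congr {𝓛 : Finset (Finset V)} (h : ∀ T ⊆ Y, T ∈ 𝒬 ↔ T ∈ 𝓛) :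
    indepSets 𝒬 Y = indepSets 𝓛 Y := by
  refine filter_congr fun I hI => ?_
  have hIY := mem_powerset.1 hI
  exact ⟨fun hI T hT hTI => hI T ((h T (hTI.trans hIY)).2 hT) hTI,
    fun hI T hT hTI => hI T ((h T (hTI.trans hIY)).1 hT) hTI⟩

lemma card_powerset_filter_superset (h : T ⊆ F) :
    (#{A ∈ F.powerset | T ⊆ A} : ℝ) = (1 / 2) ^ #T * 2 ^ #F := by
  have hIcc : {A ∈ F.powerset | T ⊆ A} = Icc T F := by
    ext A
    simp only [mem_filter, mem_powerset, mem_Icc, and_comm]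
  have hcard : #F = #F - #T + #T := (Nat.sub_add_cancel (card_le_card h)).symm
  rw [hIcc, card_Icc_finset h, hcard, pow_add, Nat.add_sub_cancel]
  push_cast
  rw [mul_comm, mul_assoc, ← mul_pow]
  norm_num

lemma one_sub_mul_two_pow_le_card_indepSets_singleton (T F : Finset V) :
    (1 - (1 / 2) ^ #T) * 2 ^ #F ≤ (#(indepSets {T} F) : ℝ) := by
  have hsplit := card_filter_add_card_filter_not (s := F.powerset) (T ⊆ ·)
  have hind : indepSets {T} F = {A ∈ F.powerset | ¬ T ⊆ A} := by
    simp only [indepSets, mem_singleton, forall_eq]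
  rw [← hind, card_powerset] at hsplit
  have hsplit' : (#{A ∈ F.powerset | T ⊆ A} : ℝ) + #(indepSets {T} F) = 2 ^ #F := by
    exact_mod_cast hsplit
  by_cases hTF : T ⊆ F
  · rw [card_powerset_filter_superset hTF] at hsplit'
    linarith
  · have hempty : {A ∈ F.powerset | T ⊆ A} = ∅ :=
      filter_eq_empty_iff.2 fun A hA hTA => hTF (hTA.trans (mem_powerset.1 hA))
    rw [hempty, card_empty, Nat.cast_zero, zero_add] at hsplit'
    rw [hsplit']
    exact mul_le_of_le_one_left (by positivity) (sub_le_self _ (by positivity))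

-- Avoiding `T` and avoiding the other members of `𝒯` are both decreasing events on the cube
-- `F.powerset`, so by the Harris inequality they are positively correlated.
lemma prod_one_sub_mul_two_pow_le_card_indepSets (𝒯 : Finset (Finset V)) (F : Finset V) :
    (∏ T ∈ 𝒯, (1 - (1 / 2) ^ #T)) * 2 ^ #F ≤ (#(indepSets 𝒯 F) : ℝ) := by
  induction 𝒯 using Finset.induction_on with
  | empty => simp [indepSets]
  | insert T 𝒯 hT ih =>
    have harris := IsLowerSet.le_card_inter_finset' (s := F) (isLowerSet_indepSets {T} F)
      (isLowerSet_indepSets 𝒯 F) (fun A hA => (mem_indepSets.1 hA).1)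
      (fun A hA => (mem_indepSets.1 hA).1)
    rw [← indepSets_union, ← insert_eq] at harris
    have harris_real : (#(indepSets {T} F) : ℝ) * #(indepSets 𝒯 F) ≤
        2 ^ #F * #(indepSets (insert T 𝒯) F) := by exact_mod_cast harris
    have hfactor : (0 : ℝ) ≤ 1 - (1 / 2) ^ #T :=
      sub_nonneg.2 (pow_le_one₀ (by norm_num) (by norm_num))
    rw [prod_insert hT]
    refine le_of_mul_le_mul_left ?_ (show (0 : ℝ) < 2 ^ #F by positivity)
    calc (2 : ℝ) ^ #F * ((1 - (1 / 2) ^ #T) * (∏ T ∈ 𝒯, (1 - (1 / 2) ^ #T)) * 2 ^ #F)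
        = ((1 - (1 / 2) ^ #T) * 2 ^ #F) * ((∏ T ∈ 𝒯, (1 - (1 / 2) ^ #T)) * 2 ^ #F) := by ring
      _ ≤ ((1 - (1 / 2) ^ #T) * 2 ^ #F) * #(indepSets 𝒯 F) :=
        mul_le_mul_of_nonneg_left ih (by positivity)
      _ ≤ #(indepSets {T} F) * #(indepSets 𝒯 F) := by
        gcongr
        exact one_sub_mul_two_pow_le_card_indepSets_singleton T F
      _ ≤ _ := harris_real

/-- The indicator that `I` contains no member of `𝓛`, minus the affine function
`exp (-2y) (1 + 2y - 2k)` of the number `k` of members of `𝓛` inside `I`. The affine function is the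
tangent at `k = y` to the lower bound `exp (-2k)` for the probability of avoiding sets whose
expected number is `k`; unlike the exponential it can be averaged over different cubes. -/
noncomputable def avoidanceGap (𝓛 : Finset (Finset V)) (y : ℝ) (I : Finset V) : ℝ :=
  (if ∀ T ∈ 𝓛, ¬ T ⊆ I then 1 else 0) -
    Real.exp (-2 * y) * (1 + 2 * y - 2 * #{T ∈ 𝓛 | T ⊆ I})

lemma avoidanceGap_congr {𝓛 : Finset (Finset V)} {I J : Finset V}
    (h : ∀ T ∈ 𝓛, T ⊆ I ↔ T ⊆ J) (y : ℝ) : avoidanceGap 𝓛 y I = avoidanceGap 𝓛 y J := by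
  have hiff : (∀ T ∈ 𝓛, ¬ T ⊆ I) ↔ ∀ T ∈ 𝓛, ¬ T ⊆ J :=
    forall₂_congr fun T hT => not_congr (h T hT)
  simp only [avoidanceGap, hiff, filter_congr h]

lemma sum_avoidanceGap (𝓛 𝒥 : Finset (Finset V)) (y : ℝ) :
    ∑ I ∈ 𝒥, avoidanceGap 𝓛 y I = #{I ∈ 𝒥 | ∀ T ∈ 𝓛, ¬ T ⊆ I} -
      Real.exp (-2 * y) * ((1 + 2 * y) * #𝒥 - 2 * ∑ I ∈ 𝒥, (#{T ∈ 𝓛 | T ⊆ I} : ℝ)) := by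
  simp only [avoidanceGap, sum_sub_distrib, sum_boole, ← mul_sum, sum_const, nsmul_eq_mul]
  ring

lemma sum_card_filter_subset_powerset (𝓛 : Finset (Finset V)) (F : Finset V) :
    ∑ A ∈ F.powerset, (#{T ∈ 𝓛 | T ⊆ A} : ℝ) =
      (∑ T ∈ 𝓛 with T ⊆ F, (1 / 2) ^ #T) * 2 ^ #F := by
  have hcount : ∀ A ∈ F.powerset,
      (#{T ∈ 𝓛 | T ⊆ A} : ℝ) = ∑ T ∈ 𝓛 with T ⊆ F, if T ⊆ A then 1 else 0 := by
    intro A hA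
    rw [sum_boole, filter_filter]
    congr 2
    exact filter_congr fun T _ => ⟨fun h => ⟨h.trans (mem_powerset.1 hA), h⟩, And.right⟩
  rw [sum_congr rfl hcount, sum_comm, sum_mul]
  refine sum_congr rfl fun T hT => ?_
  rw [sum_boole, card_powerset_filter_superset (mem_filter.1 hT).2]

lemma sum_powerset_avoidanceGap_nonneg {𝓛 : Finset (Finset V)} (h : ∅ ∉ 𝓛) (y : ℝ)
    (F : Finset V) : 0 ≤ ∑ A ∈ F.powerset, avoidanceGap 𝓛 y A := by
  set 𝒯 := {T ∈ 𝓛 | T ⊆ F} with h𝒯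
  set μ : ℝ := ∑ T ∈ 𝒯, (1 / 2) ^ #T
  have hind : {A ∈ F.powerset | ∀ T ∈ 𝓛, ¬ T ⊆ A} = indepSets 𝒯 F :=
    indepSets_congr (𝒬 := 𝓛) fun T hT => by simp only [h𝒯, mem_filter, hT, and_true]
  have htangent : Real.exp (-2 * y) * (1 + 2 * y - 2 * μ) ≤ Real.exp (-2 * μ) := by
    calc Real.exp (-2 * y) * (1 + 2 * y - 2 * μ)
        ≤ Real.exp (-2 * y) * Real.exp (2 * y - 2 * μ) := by
          gcongr
          linarith [Real.add_one_le_exp (2 * y - 2 * μ)]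
      _ = Real.exp (-2 * μ) := by rw [← Real.exp_add]; ring_nf
  have hhalf : ∀ T ∈ 𝒯, (1 / 2 : ℝ) ^ #T ≤ 1 / 2 := fun T hT =>
    pow_le_of_le_one (by norm_num) (by norm_num)
      fun h0 => h (card_eq_zero.1 h0 ▸ (mem_filter.1 hT).1)
  have havoid : Real.exp (-2 * μ) * 2 ^ #F ≤ #(indepSets 𝒯 F) :=
    (mul_le_mul_of_nonneg_right
      (exp_neg_two_mul_sum_le_prod_one_sub (fun _ _ => by positivity) hhalf) (by positivity)).trans
      (prod_one_sub_mul_two_pow_le_card_indepSets 𝒯 F)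
  rw [sum_avoidanceGap, hind, sum_card_filter_subset_powerset, card_powerset, sub_nonneg]
  push_cast
  calc _ = Real.exp (-2 * y) * (1 + 2 * y - 2 * μ) * 2 ^ #F := by ring
    _ ≤ Real.exp (-2 * μ) * 2 ^ #F := by gcongr
    _ ≤ _ := havoid

/-- The union of those members of `𝓛` that lie in `Y`. -/
def supportIn (𝓛 : Finset (Finset V)) (Y : Finset V) : Finset V :=
  {T ∈ 𝓛 | T ⊆ Y}.sup id

/-- Every member of `𝒬` inside `Y` meets the union of the members of `𝓛` inside `Y` in at most one
vertex. When `𝓛` is the link of a vertex `v` this fails exactly if, inside `Y`, some member of `𝒬`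
meets a member of the link in two vertices, or joins two members of the link into a triangle. -/
def MeetsSimply (𝒬 𝓛 : Finset (Finset V)) (Y : Finset V) : Prop :=
  ∀ Q ∈ 𝒬, Q ⊆ Y → #(Q ∩ supportIn 𝓛 Y) ≤ 1

instance (𝒬 𝓛 : Finset (Finset V)) (Y : Finset V) : Decidable (MeetsSimply 𝒬 𝓛 Y) :=
  inferInstanceAs (Decidable (∀ Q ∈ 𝒬, Q ⊆ Y → #(Q ∩ supportIn 𝓛 Y) ≤ 1))

lemma mem_supportIn {𝓛 : Finset (Finset V)} :
    v ∈ supportIn 𝓛 Y ↔ ∃ T ∈ 𝓛, T ⊆ Y ∧ v ∈ T := by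
  simp only [supportIn, mem_sup, mem_filter, id, and_assoc]

lemma supportIn_subset (𝓛 : Finset (Finset V)) (Y : Finset V) : supportIn 𝓛 Y ⊆ Y := by
  intro a ha
  obtain ⟨T, -, hTY, haT⟩ := mem_supportIn.1 ha
  exact hTY haT

/-- The vertices of `N` that can be added to `F` without leaving the independent subsets of `Y`. -/
def freeIn (𝒬 : Finset (Finset V)) (Y N F : Finset V) : Finset V :=
  {a ∈ N | insert a F ∈ indepSets 𝒬 Y}

-- A member of `𝒬` inside `F ∪ A` meets `A` in at most one vertex, so it already lies in some
-- `insert a F` with `a` free, or in `F`.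
lemma MeetsSimply.union_mem_indepSets {𝓛 : Finset (Finset V)} {A : Finset V}
    (h : MeetsSimply 𝒬 𝓛 Y) (hF : F ∈ indepSets 𝒬 Y) (hA : A ⊆ freeIn 𝒬 Y (supportIn 𝓛 Y) F) :
    F ∪ A ∈ indepSets 𝒬 Y := by
  have hAN : A ⊆ supportIn 𝓛 Y := hA.trans (filter_subset _ _)
  have hFAY : F ∪ A ⊆ Y :=
    union_subset (mem_indepSets.1 hF).1 (hAN.trans (supportIn_subset 𝓛 Y))
  refine mem_indepSets.2 ⟨hFAY, fun Q hQ hQFA => ?_⟩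
  by_cases hmeet : ∃ a ∈ Q, a ∈ A
  · obtain ⟨a, haQ, haA⟩ := hmeet
    refine (mem_indepSets.1 (mem_filter.1 (hA haA)).2).2 Q hQ fun b hbQ => ?_
    rcases mem_union.1 (hQFA hbQ) with hbF | hbA
    · exact mem_insert_of_mem hbF
    · rw [card_le_one.1 (h Q hQ (hQFA.trans hFAY)) b (mem_inter.2 ⟨hbQ, hAN hbA⟩) a
        (mem_inter.2 ⟨haQ, hAN haA⟩)]
      exact mem_insert_self a F
  · exact (mem_indepSets.1 hF).2 Q hQ fun b hbQ =>
      (mem_union.1 (hQFA hbQ)).resolve_right fun hbA => hmeet ⟨b, hbQ, hbA⟩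

lemma MeetsSimply.sum_fiber_avoidanceGap {𝓛 : Finset (Finset V)} (h : MeetsSimply 𝒬 𝓛 Y)
    (hF : F ∈ indepSets 𝒬 Y) (hFN : Disjoint F (supportIn 𝓛 Y)) (y : ℝ) :
    ∑ I ∈ indepSets 𝒬 Y with I \ supportIn 𝓛 Y = F, avoidanceGap 𝓛 y I =
      ∑ A ∈ (freeIn 𝒬 Y (supportIn 𝓛 Y) F).powerset, avoidanceGap 𝓛 y A := by
  set N := supportIn 𝓛 Y
  have hrecover : ∀ A ⊆ N, (F ∪ A) ∩ N = A ∧ (F ∪ A) \ N = F := fun A hA => by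
    rw [union_inter_distrib_right, disjoint_iff_inter_eq_empty.1 hFN, empty_union,
      union_sdiff_distrib, sdiff_eq_self_of_disjoint hFN, sdiff_eq_empty_iff_subset.2 hA,
      union_empty]
    exact ⟨inter_eq_left.2 hA, rfl⟩
  refine sum_nbij' (· ∩ N) (F ∪ ·) ?_ ?_ ?_ ?_ ?_
  · intro I hI
    obtain ⟨hIind, rfl⟩ := mem_filter.1 hI
    refine mem_powerset.2 fun a ha => mem_filter.2 ⟨(mem_inter.1 ha).2, ?_⟩
    exact isLowerSet_indepSets 𝒬 Y (insert_subset (mem_inter.1 ha).1 sdiff_subset) hIind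
  · intro A hA
    have hA' := mem_powerset.1 hA
    exact mem_filter.2 ⟨h.union_mem_indepSets hF hA',
      (hrecover A (hA'.trans (filter_subset _ _))).2⟩
  · intro I hI
    obtain ⟨-, rfl⟩ := mem_filter.1 hI
    exact sdiff_union_inter I N
  · exact fun A hA => (hrecover A ((mem_powerset.1 hA).trans (filter_subset _ _))).1
  · intro I hI
    refine avoidanceGap_congr (fun T hT => ⟨fun hTI => subset_inter hTI fun a ha => ?_,
      fun hTI => hTI.trans inter_subset_left⟩) y
    have hIY := (mem_indepSets.1 (mem_filter.1 hI).1).1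
    exact mem_supportIn.2 ⟨T, hT, hTI.trans hIY, ha⟩

lemma MeetsSimply.sum_avoidanceGap_nonneg {𝓛 : Finset (Finset V)} (h : MeetsSimply 𝒬 𝓛 Y)
    (h𝓛 : ∅ ∉ 𝓛) (y : ℝ) : 0 ≤ ∑ I ∈ indepSets 𝒬 Y, avoidanceGap 𝓛 y I := by
  set N := supportIn 𝓛 Y
  rw [← sum_fiberwise_of_maps_to (g := (· \ N)) fun I hI => mem_image_of_mem (· \ N) hI]
  refine sum_nonneg fun F hF => ?_
  obtain ⟨I, hI, rfl⟩ := mem_image.1 hF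
  rw [h.sum_fiber_avoidanceGap (isLowerSet_indepSets 𝒬 Y sdiff_subset hI) sdiff_disjoint]
  exact sum_powerset_avoidanceGap_nonneg h𝓛 y _

end IndependentSets

section ExtensionProbability

open Finset

variable {V : Type*} [DecidableEq V] {𝒬 : Finset (Finset V)} {Y Z : Finset V} {v : V} {s : ℕ}

/-- The probability that `insert v I` is still independent, for a uniformly random independent
subset `I` of `Y` with `v ∉ Y`. -/
noncomputable def extProb (𝒬 : Finset (Finset V)) (Y : Finset V) (v : V) : ℝ :=
  #(indepSets (𝒬 ∪ 𝒬.memberSubfamily v) Y) / #(indepSets 𝒬 Y)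

/-- The expected number of members of the link of `v` contained in a uniformly random independent
subset of `Y`. -/
noncomputable def linkMean (𝒬 : Finset (Finset V)) (Y : Finset V) (v : V) : ℝ :=
  (∑ I ∈ indepSets 𝒬 Y, (#{T ∈ 𝒬.memberSubfamily v | T ⊆ I} : ℝ)) / #(indepSets 𝒬 Y)

lemma card_indepSets_pos (h : ∅ ∉ 𝒬) (Y : Finset V) : (0 : ℝ) < #(indepSets 𝒬 Y) := by
  refine Nat.cast_pos.2 (card_pos.2 ⟨∅, mem_indepSets.2 ⟨empty_subset Y, fun Q hQ hQe => ?_⟩⟩)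
  exact h (subset_empty.1 hQe ▸ hQ)

lemma MeetsSimply.exp_mul_le_extProb (h : MeetsSimply 𝒬 (𝒬.memberSubfamily v) Y)
    (hempty : ∅ ∉ 𝒬) (hv : {v} ∉ 𝒬) (y : ℝ) :
    Real.exp (-2 * y) * (1 + 2 * y - 2 * linkMean 𝒬 Y v) ≤ extProb 𝒬 Y v := by
  have hpos := card_indepSets_pos hempty Y
  have hlink : ∅ ∉ 𝒬.memberSubfamily v := fun hmem => hv (mem_memberSubfamily.1 hmem).1
  have hgap := h.sum_avoidanceGap_nonneg hlink y
  have hext : {I ∈ indepSets 𝒬 Y | ∀ T ∈ 𝒬.memberSubfamily v, ¬ T ⊆ I} =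
      indepSets (𝒬 ∪ 𝒬.memberSubfamily v) Y := by
    ext I
    simp only [mem_filter, indepSets_union, mem_inter, mem_indepSets]
    tauto
  rw [sum_avoidanceGap, hext] at hgap
  rw [extProb, linkMean, le_div_iff₀ hpos]
  calc _ = Real.exp (-2 * y) * ((1 + 2 * y) * #(indepSets 𝒬 Y) -
        2 * ∑ I ∈ indepSets 𝒬 Y, (#{T ∈ 𝒬.memberSubfamily v | T ⊆ I} : ℝ)) := by
        field_simp
    _ ≤ _ := by linarith

lemma memberSubfamily_indepSets (hv : v ∈ Z) :
    (indepSets 𝒬 Z).memberSubfamily v = indepSets (𝒬 ∪ 𝒬.memberSubfamily v) (Z.erase v) := by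
  ext I
  simp only [mem_memberSubfamily, mem_indepSets, mem_union, insert_subset_iff, subset_erase]
  constructor
  · rintro ⟨⟨⟨-, hIZ⟩, hI⟩, hvI⟩
    refine ⟨⟨hIZ, hvI⟩, ?_⟩
    rintro T (hT | ⟨hT, -⟩) hTI
    · exact hI T hT (hTI.trans (subset_insert v I))
    · exact hI _ hT (insert_subset_insert v hTI)
  · rintro ⟨⟨hIZ, hvI⟩, hI⟩
    refine ⟨⟨⟨hv, hIZ⟩, fun Q hQ hQI => ?_⟩, hvI⟩
    by_cases hvQ : v ∈ Q
    · refine hI (Q.erase v) (Or.inr ⟨?_, notMem_erase v Q⟩) (subset_insert_iff.1 hQI)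
      rwa [insert_erase hvQ]
    · exact hI Q (Or.inl hQ) ((subset_insert_iff_of_notMem hvQ).1 hQI)

lemma nonMemberSubfamily_indepSets (v : V) :
    (indepSets 𝒬 Z).nonMemberSubfamily v = indepSets 𝒬 (Z.erase v) := by
  ext I
  simp only [mem_nonMemberSubfamily, mem_indepSets, subset_erase]
  tauto

lemma extProb_erase_le (hempty : ∅ ∉ 𝒬) (hv : v ∈ Z) :
    extProb 𝒬 (Z.erase v) v ≤ 2 * (#{I ∈ indepSets 𝒬 Z | v ∈ I} / #(indepSets 𝒬 Z)) := by
  have hmem : #((indepSets 𝒬 Z).memberSubfamily v) = #{I ∈ indepSets 𝒬 Z | v ∈ I} :=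
    card_image_of_injOn <| (erase_injOn' v).mono fun I hI => (mem_filter.1 hI).2
  have hsplit := card_memberSubfamily_add_card_nonMemberSubfamily v (indepSets 𝒬 Z)
  have hle := card_le_card <|
    (isLowerSet_indepSets 𝒬 Z).memberSubfamily_subset_nonMemberSubfamily (a := v)
  have htwo : (#(indepSets 𝒬 Z) : ℝ) ≤ 2 * #(indepSets 𝒬 (Z.erase v)) := by
    rw [← nonMemberSubfamily_indepSets]
    exact_mod_cast (by omega)
  rw [extProb, ← memberSubfamily_indepSets hv, hmem, mul_div_assoc',
    div_le_div_iff₀ (card_indepSets_pos hempty _) (card_indepSets_pos hempty _), mul_right_comm,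
    mul_comm]
  gcongr

lemma sum_extProb_erase_le (hempty : ∅ ∉ 𝒬) (hs : ∀ I ∈ indepSets 𝒬 Z, #I ≤ s) :
    ∑ v ∈ Z, extProb 𝒬 (Z.erase v) v ≤ 2 * s := by
  have hpos := card_indepSets_pos hempty Z
  have hdouble : ∑ v ∈ Z, #{I ∈ indepSets 𝒬 Z | v ∈ I} ≤ #(indepSets 𝒬 Z) * s := by
    refine (sum_card_bipartiteAbove_eq_sum_card_bipartiteBelow fun v I => v ∈ I).trans_le <|
      sum_le_card_nsmul _ _ _ fun I hI => (card_le_card fun v hv => ?_).trans (hs I hI)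
    exact (mem_filter.1 hv).2
  calc ∑ v ∈ Z, extProb 𝒬 (Z.erase v) v
      ≤ ∑ v ∈ Z, 2 * ((#{I ∈ indepSets 𝒬 Z | v ∈ I} : ℝ) / #(indepSets 𝒬 Z)) :=
        sum_le_sum fun v hv => extProb_erase_le hempty hv
    _ = 2 * ((∑ v ∈ Z, (#{I ∈ indepSets 𝒬 Z | v ∈ I} : ℝ)) / #(indepSets 𝒬 Z)) := by
        rw [← mul_sum, sum_div]
    _ ≤ 2 * s := by
        gcongr
        rw [div_le_iff₀' hpos]
        exact_mod_cast hdouble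

/-- The number of members of `𝒬` containing `U`. -/
def codegree (𝒬 : Finset (Finset V)) (U : Finset V) : ℕ := #{Q ∈ 𝒬 | U ⊆ Q}

lemma card_filter_mem_memberSubfamily_le_codegree (S T : Finset V) :
    #{v ∈ S | T ∈ 𝒬.memberSubfamily v} ≤ codegree 𝒬 T := by
  refine card_le_card_of_injOn (insert · T) (fun v hv => ?_) fun v hv w _ hvw => ?_
  · obtain ⟨-, hmem⟩ := mem_filter.1 hv
    exact mem_filter.2 ⟨(mem_memberSubfamily.1 hmem).1, subset_insert v T⟩
  · obtain ⟨-, hmem⟩ := mem_filter.1 hv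
    exact (insert_inj (mem_memberSubfamily.1 hmem).2).1 hvw

variable {r d : ℕ}

lemma sum_card_link_subset_le (h𝒬 : (𝒬 : Set (Finset V)).Sized (r + 1))
    (hd : ∀ U : Finset V, #U = r → codegree 𝒬 U ≤ d) (S I : Finset V) :
    ∑ v ∈ S, #{T ∈ 𝒬.memberSubfamily v | T ⊆ I} ≤ (#I).choose r * d := by
  have hlink : ∀ v, {T ∈ 𝒬.memberSubfamily v | T ⊆ I} =
      {T ∈ I.powersetCard r | T ∈ 𝒬.memberSubfamily v} := by
    intro v
    ext T
    simp only [mem_filter, mem_powersetCard]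
    refine ⟨fun ⟨hT, hTI⟩ => ⟨⟨hTI, ?_⟩, hT⟩, fun ⟨⟨hTI, _⟩, hT⟩ => ⟨hT, hTI⟩⟩
    have hcard := h𝒬 (mem_memberSubfamily.1 hT).1
    rw [card_insert_of_notMem (mem_memberSubfamily.1 hT).2] at hcard
    exact Nat.succ_injective hcard
  simp only [hlink]
  rw [← card_powersetCard]
  exact (sum_card_bipartiteAbove_eq_sum_card_bipartiteBelow
    fun v T => T ∈ 𝒬.memberSubfamily v).trans_le <| sum_le_card_nsmul _ _ _ fun T hT =>
    (card_filter_mem_memberSubfamily_le_codegree S T).trans (hd T (mem_powersetCard.1 hT).2)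

lemma sum_linkMean_le (h𝒬 : (𝒬 : Set (Finset V)).Sized (r + 1))
    (hd : ∀ U : Finset V, #U = r → codegree 𝒬 U ≤ d) (hs : ∀ I ∈ indepSets 𝒬 Y, #I ≤ s)
    (S : Finset V) : ∑ v ∈ S, linkMean 𝒬 Y v ≤ d * s ^ r := by
  have hpos := card_indepSets_pos (fun hmem => by simpa using h𝒬 hmem) Y
  have hbound : ∀ I ∈ indepSets 𝒬 Y, ∑ v ∈ S, #{T ∈ 𝒬.memberSubfamily v | T ⊆ I} ≤ d * s ^ r := by
    intro I hI
    calc _ ≤ (#I).choose r * d := sum_card_link_subset_le h𝒬 hd S I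
      _ ≤ s.choose r * d := by gcongr; exact hs I hI
      _ ≤ d * s ^ r := by rw [mul_comm]; gcongr; exact Nat.choose_le_pow s r
  simp only [linkMean]
  rw [← sum_div, sum_comm, div_le_iff₀' hpos, ← nsmul_eq_mul]
  exact sum_le_card_nsmul _ _ _ fun I hI => by exact_mod_cast hbound I hI

lemma sum_powersetCard_succ_sum_erase [Fintype V] {M : Type*} [AddCommMonoid M] (n : ℕ)
    (g : Finset V → V → M) :
    ∑ Z ∈ (univ : Finset V).powersetCard (n + 1), ∑ v ∈ Z, g (Z.erase v) v =
      ∑ Y ∈ (univ : Finset V).powersetCard n, ∑ v ∈ Yᶜ, g Y v := by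
  rw [sum_sigma', sum_sigma']
  refine sum_bij' (fun x _ => ⟨x.1.erase x.2, x.2⟩) (fun x _ => ⟨insert x.2 x.1, x.2⟩)
    ?_ ?_ ?_ ?_ fun _ _ => rfl
  · rintro ⟨Z, v⟩ h
    simp only [mem_sigma, mem_powersetCard, subset_univ, true_and, mem_compl] at h ⊢
    exact ⟨by rw [card_erase_of_mem h.2, h.1, Nat.add_sub_cancel], notMem_erase v Z⟩
  · rintro ⟨Y, v⟩ h
    simp only [mem_sigma, mem_powersetCard, subset_univ, true_and, mem_compl] at h ⊢
    exact ⟨by rw [card_insert_of_notMem h.2, h.1], mem_insert_self v Y⟩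
  · rintro ⟨Z, v⟩ h
    simp only [insert_erase (mem_sigma.1 h).2]
  · rintro ⟨Y, v⟩ h
    simp only [erase_insert (mem_compl.1 (mem_sigma.1 h).2)]

end ExtensionProbability

section RandomVertexSets

open Finset

lemma choose_sub_mul_pow_le {m n : ℕ} (hnm : n ≤ m) {j : ℕ} (hj : j ≤ n) :
    (m - j).choose (n - j) * m ^ j ≤ m.choose n * n ^ j := by
  induction j with
  | zero => simp
  | succ j ih =>
    have hstep := Nat.add_one_mul_choose_eq (m - (j + 1)) (n - (j + 1))
    rw [show m - (j + 1) + 1 = m - j by omega, show n - (j + 1) + 1 = n - j by omega] at hstep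
    have hcross : m * (n - j) ≤ n * (m - j) := by
      rw [Nat.mul_sub, Nat.mul_sub, mul_comm n m]
      exact Nat.sub_le_sub_left (Nat.mul_le_mul_right j hnm) _
    refine Nat.le_of_mul_le_mul_left ?_ (show 0 < m - j by omega)
    calc (m - j) * ((m - (j + 1)).choose (n - (j + 1)) * m ^ (j + 1))
        = (m - j) * (m - (j + 1)).choose (n - (j + 1)) * m ^ (j + 1) := by ring
      _ = (m - j).choose (n - j) * m ^ j * (m * (n - j)) := by rw [hstep]; ring
      _ ≤ m.choose n * n ^ j * (n * (m - j)) := Nat.mul_le_mul (ih (by omega)) hcross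
      _ = (m - j) * (m.choose n * n ^ (j + 1)) := by ring

variable {V : Type*} [DecidableEq V] [Fintype V] {n : ℕ}

lemma card_filter_powersetCard_superset_le (hn : n ≤ Fintype.card V) (S : Finset V) :
    (#{Y ∈ (univ : Finset V).powersetCard n | S ⊆ Y} : ℝ) ≤
      (Fintype.card V).choose n * ((n : ℝ) / Fintype.card V) ^ #S := by
  by_cases hS : #S ≤ n
  · have hpow : (0 : ℝ) < (Fintype.card V : ℝ) ^ #S := by
      rcases Nat.eq_zero_or_pos (#S) with h0 | hpos
      · simp [h0]
      · have : 0 < Fintype.card V := by omega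
        positivity
    rw [card_filter_powersetCard_subset S univ n (subset_univ S) hS, card_univ, div_pow,
      mul_div_assoc', le_div_iff₀ hpow]
    exact_mod_cast choose_sub_mul_pow_le hn hS
  · have hempty : {Y ∈ (univ : Finset V).powersetCard n | S ⊆ Y} = ∅ :=
      filter_eq_empty_iff.2 fun Y hY hSY =>
        hS ((card_le_card hSY).trans_eq (mem_powersetCard.1 hY).2)
    rw [hempty, card_empty, Nat.cast_zero]
    positivity

lemma card_filter_powersetCard_exists_superset_le {ι : Type*} (hn : n ≤ Fintype.card V)
    {P : Finset ι} {S : ι → Finset V} {j : ℕ} (hS : ∀ i ∈ P, #(S i) = j) :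
    (#{Y ∈ (univ : Finset V).powersetCard n | ∃ i ∈ P, S i ⊆ Y} : ℝ) ≤
      #P * ((Fintype.card V).choose n * ((n : ℝ) / Fintype.card V) ^ j) := by
  classical
  have hcover : {Y ∈ (univ : Finset V).powersetCard n | ∃ i ∈ P, S i ⊆ Y} ⊆
      P.biUnion fun i => {Y ∈ (univ : Finset V).powersetCard n | S i ⊆ Y} := by
    intro Y hY
    obtain ⟨hYn, i, hi, hiY⟩ := mem_filter.1 hY
    exact mem_biUnion.2 ⟨i, hi, mem_filter.2 ⟨hYn, hiY⟩⟩
  calc _ ≤ ∑ i ∈ P, (#{Y ∈ (univ : Finset V).powersetCard n | S i ⊆ Y} : ℝ) := by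
        exact_mod_cast (card_le_card hcover).trans card_biUnion_le
    _ ≤ _ := by
        rw [← nsmul_eq_mul]
        refine sum_le_card_nsmul _ _ _ fun i hi => ?_
        simpa only [hS i hi] using card_filter_powersetCard_superset_le hn (S i)

end RandomVertexSets

section OverlapCounts

open Finset

variable {V : Type*} [DecidableEq V] {𝒬 : Finset (Finset V)} {v : V} {r d j : ℕ}

lemma codegree_le_mul_card_pow [Fintype V] (h𝒬 : (𝒬 : Set (Finset V)).Sized (r + 1))
    (hd : ∀ U : Finset V, #U = r → codegree 𝒬 U ≤ d) {U : Finset V} (hU : #U + j = r) :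
    codegree 𝒬 U ≤ d * Fintype.card V ^ j := by
  induction j generalizing U with
  | zero => simpa using hd U hU
  | succ j ih =>
    have hcover : {Q ∈ 𝒬 | U ⊆ Q} ⊆ Uᶜ.biUnion fun x => {Q ∈ 𝒬 | insert x U ⊆ Q} := by
      intro Q hQ
      obtain ⟨hQ, hUQ⟩ := mem_filter.1 hQ
      obtain ⟨x, hxQ, hxU⟩ := exists_mem_notMem_of_card_lt_card
        (show #U < #Q by rw [h𝒬 hQ]; omega)
      exact mem_biUnion.2 ⟨x, mem_compl.2 hxU, mem_filter.2 ⟨hQ, insert_subset hxQ hUQ⟩⟩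
    refine (card_le_card hcover).trans <| (card_biUnion_le_card_mul _ _ _ fun x hx =>
      ih (U := insert x U) ?_).trans ?_
    · rw [card_insert_of_notMem (mem_compl.1 hx)]
      omega
    · calc _ ≤ Fintype.card V * (d * Fintype.card V ^ j) :=
            Nat.mul_le_mul_right _ (card_le_univ _)
        _ = d * Fintype.card V ^ (j + 1) := by ring

lemma card_filter_card_inter_eq_le {b : ℕ} (hb : ∀ U : Finset V, #U = j → codegree 𝒬 U ≤ b)
    (Q : Finset V) : #{Q' ∈ 𝒬 | #(Q ∩ Q') = j} ≤ (#Q).choose j * b := by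
  have hcover : {Q' ∈ 𝒬 | #(Q ∩ Q') = j} ⊆
      (Q.powersetCard j).biUnion fun U => {Q' ∈ 𝒬 | U ⊆ Q'} := by
    intro Q' hQ'
    obtain ⟨hQ', hinter⟩ := mem_filter.1 hQ'
    exact mem_biUnion.2 ⟨Q ∩ Q', mem_powersetCard.2 ⟨inter_subset_left, hinter⟩,
      mem_filter.2 ⟨hQ', inter_subset_right⟩⟩
  rw [← card_powersetCard]
  exact (card_le_card hcover).trans
    (card_biUnion_le_card_mul _ _ _ fun U hU => hb U (mem_powersetCard.1 hU).2)

/-- The pairs of members of `𝒬`, the first one through `v`, that meet in exactly `j` vertices. -/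
def overlappingPairs (𝒬 : Finset (Finset V)) (v : V) (j : ℕ) :
    Finset (Σ _ : Finset V, Finset V) :=
  {Q ∈ 𝒬 | v ∈ Q}.sigma fun Q => {Q' ∈ 𝒬 | #(Q ∩ Q') = j}

/-- The loose triangles at `v`: two members of `𝒬` meeting only in `v`, together with a third member
that avoids `v` and meets each of them in one vertex. -/
def trianglesAt (𝒬 : Finset (Finset V)) (v : V) :
    Finset (Σ _ : Finset V × Finset V, Finset V) :=
  {P ∈ {Q ∈ 𝒬 | v ∈ Q} ×ˢ {Q ∈ 𝒬 | v ∈ Q} | #(P.1 ∩ P.2) = 1}.sigma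
    fun P => {Q ∈ 𝒬 | v ∉ Q ∧ #(Q ∩ P.1) = 1 ∧ #(Q ∩ P.2) = 1}

lemma card_union_erase_of_mem_overlappingPairs (h𝒬 : (𝒬 : Set (Finset V)).Sized (r + 1))
    {p : Σ _ : Finset V, Finset V} (hp : p ∈ overlappingPairs 𝒬 v j) :
    #((p.1 ∪ p.2).erase v) = 2 * r + 1 - j := by
  obtain ⟨Q, Q'⟩ := p
  simp only [overlappingPairs, mem_sigma, mem_filter] at hp
  obtain ⟨⟨hQ, hvQ⟩, hQ', hinter⟩ := hp
  have hunion := card_union_add_card_inter Q Q'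
  rw [h𝒬 hQ, h𝒬 hQ', hinter] at hunion
  change #((Q ∪ Q').erase v) = _
  rw [card_erase_of_mem (mem_union_left _ hvQ)]
  omega

lemma disjoint_inter_of_card_inter_le_one {P Q R : Finset V} (hvP : v ∈ P) (hvQ : v ∈ Q)
    (hvR : v ∉ R) (hPQ : #(P ∩ Q) ≤ 1) : Disjoint (R ∩ P) (R ∩ Q) := by
  refine disjoint_left.2 fun a haP haQ => hvR ?_
  rw [card_le_one.1 hPQ v (mem_inter.2 ⟨hvP, hvQ⟩) a
    (mem_inter.2 ⟨(mem_inter.1 haP).2, (mem_inter.1 haQ).2⟩)]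
  exact (mem_inter.1 haP).1

lemma card_union_erase_of_mem_trianglesAt (h𝒬 : (𝒬 : Set (Finset V)).Sized (r + 1))
    {p : Σ _ : Finset V × Finset V, Finset V} (hp : p ∈ trianglesAt 𝒬 v) :
    #((p.1.1 ∪ p.1.2 ∪ p.2).erase v) = 3 * r - 1 := by
  obtain ⟨⟨Q₁, Q₂⟩, Q⟩ := p
  simp only [trianglesAt, mem_sigma, mem_filter, mem_product] at hp
  obtain ⟨⟨⟨⟨hQ₁, hv₁⟩, hQ₂, hv₂⟩, h₁₂⟩, hQ, hvQ, hQQ₁, hQQ₂⟩ := hp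
  have hinter : #((Q₁ ∪ Q₂) ∩ Q) = 2 := by
    rw [inter_comm, inter_union_distrib_left, card_union_of_disjoint
      (disjoint_inter_of_card_inter_le_one hv₁ hv₂ hvQ h₁₂.le), hQQ₁, hQQ₂]
  have hunion := card_union_add_card_inter Q₁ Q₂
  have hunion' := card_union_add_card_inter (Q₁ ∪ Q₂) Q
  rw [h𝒬 hQ₁, h𝒬 hQ₂, h₁₂] at hunion
  rw [h𝒬 hQ, hinter] at hunion'
  change #((Q₁ ∪ Q₂ ∪ Q).erase v) = _
  rw [card_erase_of_mem (mem_union_left _ (mem_union_left _ hv₁))]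
  omega

lemma card_filter_meets_two_le {b : ℕ} (hb : ∀ U : Finset V, #U = 2 → codegree 𝒬 U ≤ b)
    {P Q : Finset V} (hvP : v ∈ P) (hvQ : v ∈ Q) (hPQ : #(P ∩ Q) ≤ 1) :
    #{R ∈ 𝒬 | v ∉ R ∧ #(R ∩ P) = 1 ∧ #(R ∩ Q) = 1} ≤ #P * #Q * b := by
  have hcover : {R ∈ 𝒬 | v ∉ R ∧ #(R ∩ P) = 1 ∧ #(R ∩ Q) = 1} ⊆
      {a ∈ P ×ˢ Q | a.1 ≠ a.2}.biUnion fun a => {R ∈ 𝒬 | {a.1, a.2} ⊆ R} := by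
    intro R hR
    obtain ⟨hR, hvR, hRP, hRQ⟩ := mem_filter.1 hR
    obtain ⟨a, ha⟩ := card_pos.1 (hRP ▸ Nat.one_pos)
    obtain ⟨b, hb⟩ := card_pos.1 (hRQ ▸ Nat.one_pos)
    have hab : a ≠ b :=
      disjoint_iff_ne.1 (disjoint_inter_of_card_inter_le_one hvP hvQ hvR hPQ) a ha b hb
    rw [mem_inter] at ha hb
    exact mem_biUnion.2 ⟨(a, b), mem_filter.2 ⟨mem_product.2 ⟨ha.2, hb.2⟩, hab⟩,
      mem_filter.2 ⟨hR, insert_subset ha.1 (singleton_subset_iff.2 hb.1)⟩⟩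
  calc _ ≤ #{a ∈ P ×ˢ Q | a.1 ≠ a.2} * b := (card_le_card hcover).trans
        (card_biUnion_le_card_mul _ _ _ fun a ha => hb _ (card_pair (mem_filter.1 ha).2))
    _ ≤ #P * #Q * b := by
        rw [← card_product]
        exact Nat.mul_le_mul_right _ (card_filter_le _ _)

variable [Fintype V]

lemma card_filter_mem_le (h𝒬 : (𝒬 : Set (Finset V)).Sized (r + 1))
    (hd : ∀ U : Finset V, #U = r → codegree 𝒬 U ≤ d) (hr : 1 ≤ r) (v : V) :
    #{Q ∈ 𝒬 | v ∈ Q} ≤ d * Fintype.card V ^ (r - 1) := by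
  have hdeg := codegree_le_mul_card_pow h𝒬 hd (U := {v}) (j := r - 1)
    (by rw [card_singleton]; omega)
  simpa only [codegree, singleton_subset_iff] using hdeg

lemma card_overlappingPairs_le (h𝒬 : (𝒬 : Set (Finset V)).Sized (r + 1))
    (hd : ∀ U : Finset V, #U = r → codegree 𝒬 U ≤ d) (hr : 1 ≤ r) (hj : j ≤ r) (v : V) :
    #(overlappingPairs 𝒬 v j) ≤ (r + 1).choose j * d ^ 2 * Fintype.card V ^ (2 * r - 1 - j) := by
  have hpow : Fintype.card V ^ (2 * r - 1 - j) =
      Fintype.card V ^ (r - 1) * Fintype.card V ^ (r - j) := by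
    rw [← pow_add]; congr 1; omega
  calc #(overlappingPairs 𝒬 v j)
      = ∑ Q ∈ 𝒬 with v ∈ Q, #{Q' ∈ 𝒬 | #(Q ∩ Q') = j} := card_sigma _ _
    _ ≤ #{Q ∈ 𝒬 | v ∈ Q} * ((r + 1).choose j * (d * Fintype.card V ^ (r - j))) := by
        refine sum_le_card_nsmul _ _ _ fun Q hQ => ?_
        rw [← h𝒬 (mem_filter.1 hQ).1]
        exact card_filter_card_inter_eq_le
          (fun U hU => codegree_le_mul_card_pow h𝒬 hd (by omega)) Q
    _ ≤ d * Fintype.card V ^ (r - 1) * ((r + 1).choose j * (d * Fintype.card V ^ (r - j))) :=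
        Nat.mul_le_mul_right _ (card_filter_mem_le h𝒬 hd hr v)
    _ = _ := by rw [hpow]; ring

lemma card_trianglesAt_le (h𝒬 : (𝒬 : Set (Finset V)).Sized (r + 1))
    (hd : ∀ U : Finset V, #U = r → codegree 𝒬 U ≤ d) (hr : 2 ≤ r) (v : V) :
    #(trianglesAt 𝒬 v) ≤ (r + 1) ^ 2 * d ^ 3 * Fintype.card V ^ (3 * r - 4) := by
  set D := d * Fintype.card V ^ (r - 1)
  have hstar : #{Q ∈ 𝒬 | v ∈ Q} ≤ D := card_filter_mem_le h𝒬 hd (by omega) v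
  have hpow : Fintype.card V ^ (3 * r - 4) =
      Fintype.card V ^ (r - 1) * Fintype.card V ^ (r - 1) * Fintype.card V ^ (r - 2) := by
    rw [← pow_add, ← pow_add]; congr 1; omega
  calc #(trianglesAt 𝒬 v)
      ≤ #{P ∈ {Q ∈ 𝒬 | v ∈ Q} ×ˢ {Q ∈ 𝒬 | v ∈ Q} | #(P.1 ∩ P.2) = 1} *
          ((r + 1) * (r + 1) * (d * Fintype.card V ^ (r - 2))) := by
        rw [trianglesAt, card_sigma]
        refine sum_le_card_nsmul _ _ _ fun P hP => ?_
        simp only [mem_filter, mem_product] at hP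
        obtain ⟨⟨⟨hQ₁, hv₁⟩, hQ₂, hv₂⟩, h₁₂⟩ := hP
        have hbound := card_filter_meets_two_le
          (fun U hU => codegree_le_mul_card_pow h𝒬 hd (U := U) (j := r - 2) (by omega))
          hv₁ hv₂ h₁₂.le
        rwa [h𝒬 hQ₁, h𝒬 hQ₂] at hbound
    _ ≤ D * D * ((r + 1) * (r + 1) * (d * Fintype.card V ^ (r - 2))) := by
        gcongr
        refine (card_filter_le _ _).trans ?_
        rw [card_product]
        exact Nat.mul_le_mul hstar hstar
    _ = _ := by rw [hpow]; ring

end OverlapCounts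

section BadSets

open Finset

variable {V : Type*} [DecidableEq V] {𝒬 : Finset (Finset V)} {Y : Finset V} {v : V} {r d n : ℕ}

lemma card_inter_le_one_of_forall_overlappingPairs (h𝒬 : (𝒬 : Set (Finset V)).Sized (r + 1))
    (hno : ∀ j ∈ Icc 2 r, ∀ p ∈ overlappingPairs 𝒬 v j, ¬ p.1 ∪ p.2 ⊆ insert v Y)
    {Q Q' : Finset V} (hQ : Q ∈ 𝒬) (hQ' : Q' ∈ 𝒬) (hvQ : v ∈ Q) (hne : Q ≠ Q')
    (hQY : Q ⊆ insert v Y) (hQ'Y : Q' ⊆ insert v Y) : #(Q ∩ Q') ≤ 1 := by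
  by_contra! htwo
  have hproper : #(Q ∩ Q') < r + 1 := by
    rw [← h𝒬 hQ]
    refine card_lt_card (ssubset_of_subset_of_ne inter_subset_left fun hinter => hne ?_)
    exact eq_of_subset_of_card_le (inter_eq_left.1 hinter) (by rw [h𝒬 hQ, h𝒬 hQ'])
  refine hno _ (mem_Icc.2 ⟨htwo, Nat.lt_succ_iff.1 hproper⟩) ⟨Q, Q'⟩ ?_ (union_subset hQY hQ'Y)
  simp only [overlappingPairs, mem_sigma, mem_filter]
  exact ⟨⟨hQ, hvQ⟩, hQ', trivial⟩

lemma exists_overlappingPair_or_triangle_of_not_meetsSimply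
    (h𝒬 : (𝒬 : Set (Finset V)).Sized (r + 1)) (hv : v ∉ Y)
    (hbad : ¬ MeetsSimply 𝒬 (𝒬.memberSubfamily v) Y) :
    (∃ j ∈ Icc 2 r, ∃ p ∈ overlappingPairs 𝒬 v j, p.1 ∪ p.2 ⊆ insert v Y) ∨
      ∃ p ∈ trianglesAt 𝒬 v, p.1.1 ∪ p.1.2 ∪ p.2 ⊆ insert v Y := by
  by_contra! hcon
  obtain ⟨hno, hnoTriangle⟩ := hcon
  refine hbad fun Q hQ hQY => card_le_one.2 fun a ha b hb => ?_
  obtain ⟨haQ, ha⟩ := mem_inter.1 ha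
  obtain ⟨hbQ, hb⟩ := mem_inter.1 hb
  obtain ⟨T₁, hT₁, hT₁Y, haT₁⟩ := mem_supportIn.1 ha
  obtain ⟨T₂, hT₂, hT₂Y, hbT₂⟩ := mem_supportIn.1 hb
  obtain ⟨hT₁, -⟩ := mem_memberSubfamily.1 hT₁
  obtain ⟨hT₂, -⟩ := mem_memberSubfamily.1 hT₂
  have hvQ : v ∉ Q := fun h => hv (hQY h)
  have hQY' : Q ⊆ insert v Y := hQY.trans (subset_insert v Y)
  have hT₁Y' := insert_subset_insert v hT₁Y
  have hT₂Y' := insert_subset_insert v hT₂Y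
  have hv₁ := mem_insert_self v T₁
  have hv₂ := mem_insert_self v T₂
  have ha₁ : a ∈ Q ∩ insert v T₁ := mem_inter.2 ⟨haQ, mem_insert_of_mem haT₁⟩
  have hb₂ : b ∈ Q ∩ insert v T₂ := mem_inter.2 ⟨hbQ, mem_insert_of_mem hbT₂⟩
  have hone := @card_inter_le_one_of_forall_overlappingPairs _ _ _ _ _ _ h𝒬 hno
  have h₁ : #(Q ∩ insert v T₁) ≤ 1 := by
    rw [inter_comm]
    exact hone hT₁ hQ hv₁ (fun h => hvQ (h ▸ hv₁)) hT₁Y' hQY'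
  have h₂ : #(Q ∩ insert v T₂) ≤ 1 := by
    rw [inter_comm]
    exact hone hT₂ hQ hv₂ (fun h => hvQ (h ▸ hv₂)) hT₂Y' hQY'
  by_cases h₁₂ : insert v T₁ = insert v T₂
  · exact card_le_one.1 h₁ a ha₁ b (h₁₂ ▸ hb₂)
  · refine absurd (union_subset (union_subset hT₁Y' hT₂Y') hQY')
      (hnoTriangle ⟨(insert v T₁, insert v T₂), Q⟩ ?_)
    simp only [trianglesAt, mem_sigma, mem_filter, mem_product]
    exact ⟨⟨⟨⟨hT₁, hv₁⟩, hT₂, hv₂⟩, (hone hT₁ hT₂ hv₁ h₁₂ hT₁Y' hT₂Y').antisymm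
        (card_pos.2 ⟨v, mem_inter.2 ⟨hv₁, hv₂⟩⟩)⟩, hQ, hvQ,
      h₁.antisymm (card_pos.2 ⟨a, ha₁⟩), h₂.antisymm (card_pos.2 ⟨b, hb₂⟩)⟩

variable [Fintype V]

lemma card_filter_overlappingPairs_le (h𝒬 : (𝒬 : Set (Finset V)).Sized (r + 1))
    (hd : ∀ U : Finset V, #U = r → codegree 𝒬 U ≤ d) (hn : 1 ≤ n) (hnm : n ≤ Fintype.card V)
    {j : ℕ} (hj : j ∈ Icc 2 r) (v : V) :
    (#{Y ∈ (univ : Finset V).powersetCard n |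
        ∃ p ∈ overlappingPairs 𝒬 v j, p.1 ∪ p.2 ⊆ insert v Y} : ℝ) ≤
      (r + 1).choose j * ((Fintype.card V).choose n *
        (d ^ 2 * n ^ (2 * r - 1) / (Fintype.card V : ℝ) ^ 2)) := by
  obtain ⟨hj₂, hjr⟩ := mem_Icc.1 hj
  set m := Fintype.card V
  have hm : (0 : ℝ) < m := Nat.cast_pos.2 (by omega)
  have hcover := card_filter_powersetCard_exists_superset_le (P := overlappingPairs 𝒬 v j)
    (S := fun p => (p.1 ∪ p.2).erase v) hnm
    fun _ hp => card_union_erase_of_mem_overlappingPairs h𝒬 hp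
  have hcard : (#(overlappingPairs 𝒬 v j) : ℝ) ≤
      (r + 1).choose j * d ^ 2 * m ^ (2 * r - 1 - j) := by
    exact_mod_cast card_overlappingPairs_le h𝒬 hd (by omega) hjr v
  have hmpow : (m : ℝ) ^ (2 * r + 1 - j) = m ^ (2 * r - 1 - j) * m ^ 2 := by
    rw [← pow_add]; congr 1; omega
  have hnpow : (n : ℝ) ^ (2 * r + 1 - j) ≤ n ^ (2 * r - 1) :=
    pow_le_pow_right₀ (by exact_mod_cast hn) (by omega)
  simp only [subset_insert_iff]
  calc _ ≤ _ := hcover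
    _ ≤ (r + 1).choose j * d ^ 2 * m ^ (2 * r - 1 - j) *
        (m.choose n * ((n : ℝ) / m) ^ (2 * r + 1 - j)) := by gcongr
    _ = (r + 1).choose j * (m.choose n * (d ^ 2 * n ^ (2 * r + 1 - j) / (m : ℝ) ^ 2)) := by
        rw [div_pow, hmpow]
        field_simp
    _ ≤ _ := by gcongr

lemma card_filter_trianglesAt_le (h𝒬 : (𝒬 : Set (Finset V)).Sized (r + 1))
    (hd : ∀ U : Finset V, #U = r → codegree 𝒬 U ≤ d) (hr : 2 ≤ r) (hnm : n ≤ Fintype.card V)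
    (v : V) :
    (#{Y ∈ (univ : Finset V).powersetCard n |
        ∃ p ∈ trianglesAt 𝒬 v, p.1.1 ∪ p.1.2 ∪ p.2 ⊆ insert v Y} : ℝ) ≤
      (Fintype.card V).choose n *
        ((r + 1) ^ 2 * d ^ 3 * n ^ (3 * r - 1) / (Fintype.card V : ℝ) ^ 3) := by
  set m := Fintype.card V
  have hm : (0 : ℝ) < m := Nat.cast_pos.2 (Fintype.card_pos_iff.2 ⟨v⟩)
  have hcover := card_filter_powersetCard_exists_superset_le (P := trianglesAt 𝒬 v)
    (S := fun p => (p.1.1 ∪ p.1.2 ∪ p.2).erase v) hnm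
    fun _ hp => card_union_erase_of_mem_trianglesAt h𝒬 hp
  have hcard : (#(trianglesAt 𝒬 v) : ℝ) ≤ (r + 1) ^ 2 * d ^ 3 * m ^ (3 * r - 4) := by
    exact_mod_cast card_trianglesAt_le h𝒬 hd hr v
  have hmpow : (m : ℝ) ^ (3 * r - 1) = m ^ (3 * r - 4) * m ^ 3 := by
    rw [← pow_add]; congr 1; omega
  simp only [subset_insert_iff]
  calc _ ≤ _ := hcover
    _ ≤ (r + 1) ^ 2 * d ^ 3 * m ^ (3 * r - 4) * (m.choose n * ((n : ℝ) / m) ^ (3 * r - 1)) := by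
        gcongr
    _ = _ := by
        rw [div_pow, hmpow]
        field_simp

lemma card_filter_not_meetsSimply_le (h𝒬 : (𝒬 : Set (Finset V)).Sized (r + 1))
    (hd : ∀ U : Finset V, #U = r → codegree 𝒬 U ≤ d) (hr : 2 ≤ r) (hn : 1 ≤ n)
    (hnm : n ≤ Fintype.card V) (v : V) :
    (#{Y ∈ (univ : Finset V).powersetCard n |
        v ∉ Y ∧ ¬ MeetsSimply 𝒬 (𝒬.memberSubfamily v) Y} : ℝ) ≤
      (Fintype.card V).choose n *
        (2 ^ (r + 1) * d ^ 2 * n ^ (2 * r - 1) / (Fintype.card V : ℝ) ^ 2 +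
          (r + 1) ^ 2 * d ^ 3 * n ^ (3 * r - 1) / (Fintype.card V : ℝ) ^ 3) := by
  set m := Fintype.card V
  have hcover : {Y ∈ (univ : Finset V).powersetCard n |
      v ∉ Y ∧ ¬ MeetsSimply 𝒬 (𝒬.memberSubfamily v) Y} ⊆
      ((Icc 2 r).biUnion fun j => {Y ∈ (univ : Finset V).powersetCard n |
        ∃ p ∈ overlappingPairs 𝒬 v j, p.1 ∪ p.2 ⊆ insert v Y}) ∪
      {Y ∈ (univ : Finset V).powersetCard n |
        ∃ p ∈ trianglesAt 𝒬 v, p.1.1 ∪ p.1.2 ∪ p.2 ⊆ insert v Y} := by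
    intro Y hY
    obtain ⟨hYn, hv, hbad⟩ := mem_filter.1 hY
    rcases exists_overlappingPair_or_triangle_of_not_meetsSimply h𝒬 hv hbad with ⟨j, hj, hp⟩ | hp
    · exact mem_union_left _ (mem_biUnion.2 ⟨j, hj, mem_filter.2 ⟨hYn, hp⟩⟩)
    · exact mem_union_right _ (mem_filter.2 ⟨hYn, hp⟩)
  have hchoose : ∑ j ∈ Icc 2 r, ((r + 1).choose j : ℝ) ≤ 2 ^ (r + 1) := by
    have hsub : Icc 2 r ⊆ range (r + 1 + 1) := fun j hj => by
      rw [mem_Icc] at hj; rw [mem_range]; omega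
    exact_mod_cast (sum_le_sum_of_subset hsub).trans_eq (Nat.sum_range_choose (r + 1))
  calc _ ≤ (∑ j ∈ Icc 2 r, (#{Y ∈ (univ : Finset V).powersetCard n |
          ∃ p ∈ overlappingPairs 𝒬 v j, p.1 ∪ p.2 ⊆ insert v Y} : ℝ)) +
        (#{Y ∈ (univ : Finset V).powersetCard n |
          ∃ p ∈ trianglesAt 𝒬 v, p.1.1 ∪ p.1.2 ∪ p.2 ⊆ insert v Y} : ℝ) := by
        exact_mod_cast (card_le_card hcover).trans <|
          (card_union_le _ _).trans (Nat.add_le_add_right card_biUnion_le _)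
    _ ≤ ∑ j ∈ Icc 2 r, (r + 1).choose j * (m.choose n * (d ^ 2 * n ^ (2 * r - 1) / (m : ℝ) ^ 2)) +
        m.choose n * ((r + 1) ^ 2 * d ^ 3 * n ^ (3 * r - 1) / (m : ℝ) ^ 3) :=
        add_le_add (sum_le_sum fun j hj => card_filter_overlappingPairs_le h𝒬 hd hn hnm hj v)
          (card_filter_trianglesAt_le h𝒬 hd hr hnm v)
    _ ≤ 2 ^ (r + 1) * (m.choose n * (d ^ 2 * n ^ (2 * r - 1) / (m : ℝ) ^ 2)) +
        m.choose n * ((r + 1) ^ 2 * d ^ 3 * n ^ (3 * r - 1) / (m : ℝ) ^ 3) := by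
        rw [← sum_mul]
        gcongr
    _ = _ := by ring

end BadSets

section Averaging

open Finset

variable {V : Type*} [DecidableEq V] [Fintype V] {𝒬 : Finset (Finset V)} {r d s n : ℕ}

lemma half_mul_le_sum_card_filter_meetsSimply (hn : 4 * n ≤ Fintype.card V)
    (hbad : ∀ v, (#{Y ∈ (univ : Finset V).powersetCard n |
      v ∉ Y ∧ ¬ MeetsSimply 𝒬 (𝒬.memberSubfamily v) Y} : ℝ) ≤ (Fintype.card V).choose n / 4) :
    ((Fintype.card V).choose n * Fintype.card V / 2 : ℝ) ≤
      ∑ Y ∈ (univ : Finset V).powersetCard n,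
        (#{v ∈ Yᶜ | MeetsSimply 𝒬 (𝒬.memberSubfamily v) Y} : ℝ) := by
  set m := Fintype.card V
  have hgood : ∀ Y ∈ (univ : Finset V).powersetCard n,
      (#{v ∈ Yᶜ | MeetsSimply 𝒬 (𝒬.memberSubfamily v) Y} : ℝ) =
        m - n - #{v | v ∉ Y ∧ ¬ MeetsSimply 𝒬 (𝒬.memberSubfamily v) Y} := by
    intro Y hY
    have hsplit := card_filter_add_card_filter_not (s := Yᶜ)
      fun v => MeetsSimply 𝒬 (𝒬.memberSubfamily v) Y
    have hcompl := card_add_card_compl Y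
    rw [(mem_powersetCard.1 hY).2] at hcompl
    have hfilter : ({v | v ∉ Y ∧ ¬ MeetsSimply 𝒬 (𝒬.memberSubfamily v) Y} : Finset V) =
        {v ∈ Yᶜ | ¬ MeetsSimply 𝒬 (𝒬.memberSubfamily v) Y} := by
      ext v
      simp only [mem_filter, mem_univ, true_and, mem_compl]
    rw [hfilter, show (m : ℝ) = n + #Yᶜ by exact_mod_cast hcompl.symm, ← hsplit]
    push_cast
    ring
  have hdouble : (∑ Y ∈ (univ : Finset V).powersetCard n,
      #{v | v ∉ Y ∧ ¬ MeetsSimply 𝒬 (𝒬.memberSubfamily v) Y} : ℝ) ≤ m * (m.choose n / 4) := by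
    rw [← nsmul_eq_mul]
    refine le_of_eq_of_le ?_ (sum_le_card_nsmul univ _ _ fun v _ => hbad v)
    exact_mod_cast sum_card_bipartiteAbove_eq_sum_card_bipartiteBelow
      fun Y v => v ∉ Y ∧ ¬ MeetsSimply 𝒬 (𝒬.memberSubfamily v) Y
  have hn' : (4 * n : ℝ) ≤ m := by exact_mod_cast hn
  rw [sum_congr rfl hgood, sum_sub_distrib, sum_const, card_powersetCard, card_univ, nsmul_eq_mul]
  nlinarith [(Nat.cast_nonneg (m.choose n) : (0 : ℝ) ≤ m.choose n)]

lemma exp_mul_sub_le_sum_extProb (h𝒬 : (𝒬 : Set (Finset V)).Sized (r + 1)) (hr : 1 ≤ r)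
    (hd : ∀ U : Finset V, #U = r → codegree 𝒬 U ≤ d) {Y : Finset V}
    (hs : ∀ I ∈ indepSets 𝒬 Y, #I ≤ s) (y : ℝ) :
    Real.exp (-2 * y) *
        ((1 + 2 * y) * #{v ∈ Yᶜ | MeetsSimply 𝒬 (𝒬.memberSubfamily v) Y} - 2 * (d * s ^ r)) ≤
      ∑ v ∈ Yᶜ, extProb 𝒬 Y v := by
  have hempty : ∅ ∉ 𝒬 := fun hmem => by simpa using h𝒬 hmem
  have hsingle : ∀ v : V, {v} ∉ 𝒬 := fun v hmem => by
    have hcard := h𝒬 hmem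
    rw [card_singleton] at hcard
    omega
  set G := {v ∈ Yᶜ | MeetsSimply 𝒬 (𝒬.memberSubfamily v) Y}
  calc _ ≤ Real.exp (-2 * y) * ((1 + 2 * y) * #G - 2 * ∑ v ∈ G, linkMean 𝒬 Y v) := by
        gcongr
        exact sum_linkMean_le h𝒬 hd hs G
    _ = ∑ v ∈ G, Real.exp (-2 * y) * (1 + 2 * y - 2 * linkMean 𝒬 Y v) := by
        rw [← mul_sum, sum_sub_distrib, sum_const, nsmul_eq_mul, ← mul_sum]
        ring
    _ ≤ ∑ v ∈ G, extProb 𝒬 Y v := sum_le_sum fun v hv =>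
        (mem_filter.1 hv).2.exp_mul_le_extProb hempty (hsingle v) y
    _ ≤ _ := sum_le_sum_of_subset_of_nonneg (filter_subset _ _) fun _ _ _ => by
        unfold extProb; positivity

lemma exp_mul_half_mul_le_sum_extProb (h𝒬 : (𝒬 : Set (Finset V)).Sized (r + 1)) (hr : 1 ≤ r)
    (hd : ∀ U : Finset V, #U = r → codegree 𝒬 U ≤ d) (hV : 0 < Fintype.card V)
    (hs : ∀ Y : Finset V, ∀ I ∈ indepSets 𝒬 Y, #I ≤ s) (hn : 4 * n ≤ Fintype.card V)
    (hbad : ∀ v, (#{Y ∈ (univ : Finset V).powersetCard n |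
      v ∉ Y ∧ ¬ MeetsSimply 𝒬 (𝒬.memberSubfamily v) Y} : ℝ) ≤ (Fintype.card V).choose n / 4) :
    Real.exp (-2 * (2 * d * s ^ r / Fintype.card V)) *
        ((Fintype.card V).choose n * Fintype.card V / 2) ≤
      ∑ Y ∈ (univ : Finset V).powersetCard n, ∑ v ∈ Yᶜ, extProb 𝒬 Y v := by
  set m := Fintype.card V
  set y : ℝ := 2 * d * s ^ r / m
  have hm : (0 : ℝ) < m := Nat.cast_pos.2 hV
  refine le_trans ?_ (sum_le_sum fun Y _ => exp_mul_sub_le_sum_extProb h𝒬 hr hd (hs Y) y)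
  rw [← mul_sum, sum_sub_distrib, ← mul_sum, sum_const, card_powersetCard, card_univ, nsmul_eq_mul]
  gcongr
  have hy : 2 * (d * s ^ r : ℝ) = y * m := by
    rw [div_mul_cancel₀ _ hm.ne']
    ring
  rw [hy]
  have hy₀ : 0 ≤ y := by positivity
  nlinarith [half_mul_le_sum_card_filter_meetsSimply hn hbad]

-- Average, over all pairs of an `n`-set `Y` and a vertex `v ∉ Y`, the probability that `v` extends
-- a random independent subset of `Y`.
lemma exp_mul_succ_le_of_forall_card_le (h𝒬 : (𝒬 : Set (Finset V)).Sized (r + 1)) (hr : 1 ≤ r)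
    (hd : ∀ U : Finset V, #U = r → codegree 𝒬 U ≤ d) (hV : 0 < Fintype.card V)
    (hs : ∀ I ∈ indepSets 𝒬 univ, #I ≤ s) (hn : 4 * n ≤ Fintype.card V)
    (hbad : ∀ v, (#{Y ∈ (univ : Finset V).powersetCard n |
      v ∉ Y ∧ ¬ MeetsSimply 𝒬 (𝒬.memberSubfamily v) Y} : ℝ) ≤ (Fintype.card V).choose n / 4) :
    Real.exp (-2 * (2 * d * s ^ r / Fintype.card V)) * (n + 1) ≤ 4 * s := by
  set m := Fintype.card V
  set y : ℝ := 2 * d * s ^ r / m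
  have : (0 : ℝ) < m := Nat.cast_pos.2 hV
  have : (0 : ℝ) < m.choose n := Nat.cast_pos.2 (Nat.choose_pos (by omega))
  have hsub : ∀ Y : Finset V, ∀ I ∈ indepSets 𝒬 Y, #I ≤ s := fun Y I hI =>
    hs I (mem_indepSets.2 ⟨subset_univ I, (mem_indepSets.1 hI).2⟩)
  have hempty : ∅ ∉ 𝒬 := fun hmem => by simpa using h𝒬 hmem
  have hupper : ∑ Z ∈ (univ : Finset V).powersetCard (n + 1),
      ∑ v ∈ Z, extProb 𝒬 (Z.erase v) v ≤ m.choose (n + 1) * (2 * s) := by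
    refine (sum_le_card_nsmul _ _ _ fun Z _ => sum_extProb_erase_le hempty (hsub _)).trans_eq ?_
    rw [card_powersetCard, card_univ, nsmul_eq_mul]
  have hlower := exp_mul_half_mul_le_sum_extProb h𝒬 hr hd hV hsub hn hbad
  rw [sum_powersetCard_succ_sum_erase] at hupper
  have hsucc : (m.choose (n + 1) * (n + 1) : ℝ) ≤ m.choose n * m := by
    have heq := Nat.choose_succ_right_eq m n
    have hle : m.choose (n + 1) * (n + 1) ≤ m.choose n * m :=
      heq.trans_le (Nat.mul_le_mul_left _ (Nat.sub_le m n))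
    exact_mod_cast hle
  refine le_of_mul_le_mul_left ?_ (show (0 : ℝ) < m.choose n * m / 2 by positivity)
  calc _ = Real.exp (-2 * y) * (m.choose n * m / 2) * (n + 1) := by ring
    _ ≤ m.choose (n + 1) * (2 * s) * (n + 1) :=
      mul_le_mul_of_nonneg_right (hlower.trans hupper) (by positivity)
    _ = m.choose (n + 1) * (n + 1) * (2 * s) := by ring
    _ ≤ m.choose n * m * (2 * s) := by gcongr
    _ = _ := by ring

end Averaging

section IndependenceNumber

open Finset

variable {r d s n : ℕ} {m w : ℝ}

lemma two_pow_mul_sq_add_mul_cube_le (r d : ℕ) :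
    2 ^ (r + 1) * d ^ 2 + (r + 1) ^ 2 * d ^ 3 ≤ (4 ^ (r + 2) * d) ^ 3 := by
  have hfour : 4 ^ (r + 1) = (2 ^ (r + 1)) ^ 2 := by
    rw [← pow_mul, mul_comm, pow_mul]; norm_num
  have hsq : (r + 1) ^ 2 ≤ 4 ^ (r + 1) :=
    hfour ▸ Nat.pow_le_pow_left (Nat.lt_two_pow_self (n := r + 1)).le 2
  have hd : d ^ 2 ≤ d ^ 3 := by
    rcases Nat.eq_zero_or_pos d with rfl | hd
    · simp
    · exact Nat.pow_le_pow_right hd (by norm_num)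
  calc 2 ^ (r + 1) * d ^ 2 + (r + 1) ^ 2 * d ^ 3
      ≤ 4 ^ (r + 1) * d ^ 3 + 4 ^ (r + 1) * d ^ 3 := by gcongr; norm_num
    _ ≤ 4 ^ (r + 2) * d ^ 3 := by
        rw [← two_mul, ← mul_assoc, pow_succ' 4 (r + 1)]
        gcongr
        norm_num
    _ ≤ (4 ^ (r + 2)) ^ 3 * d ^ 3 :=
        Nat.mul_le_mul_right _ (Nat.le_self_pow three_ne_zero _)
    _ = (4 ^ (r + 2) * d) ^ 3 := (mul_pow _ _ _).symm

lemma add_mul_pow_div_le_quarter (hr : 2 ≤ r) (hd : 1 ≤ d) (hw : 4 ^ (r + 2) * d ≤ w)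
    (hm : m = w ^ (16 * r - 4)) (hn : n ≤ w ^ 16) :
    2 ^ (r + 1) * d ^ 2 * n ^ (2 * r - 1) / m ^ 2 +
      (r + 1) ^ 2 * d ^ 3 * n ^ (3 * r - 1) / m ^ 3 ≤ 1 / 4 := by
  have hw₄ : 4 ≤ w := by
    refine le_trans ?_ hw
    exact_mod_cast (Nat.le_self_pow (by omega) 4).trans (Nat.le_mul_of_pos_right _ hd)
  have hm₀ : 0 < m := by subst hm; positivity
  have hratio : ∀ a k : ℕ, 16 * a + 4 ≤ (16 * r - 4) * k → (n : ℝ) ^ a / m ^ k ≤ 1 / w ^ 4 := by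
    intro a k hak
    rw [div_le_div_iff₀ (by positivity) (by positivity), one_mul]
    calc (n : ℝ) ^ a * w ^ 4 ≤ (w ^ 16) ^ a * w ^ 4 := by gcongr
      _ = w ^ (16 * a + 4) := by rw [← pow_mul, ← pow_add]
      _ ≤ w ^ ((16 * r - 4) * k) := pow_le_pow_right₀ (by linarith) hak
      _ = m ^ k := by rw [hm, ← pow_mul]
  have hconst : (2 ^ (r + 1) * d ^ 2 + (r + 1) ^ 2 * d ^ 3 : ℝ) ≤ w ^ 4 / 4 := by
    calc (2 ^ (r + 1) * d ^ 2 + (r + 1) ^ 2 * d ^ 3 : ℝ) ≤ (4 ^ (r + 2) * d) ^ 3 := by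
          exact_mod_cast two_pow_mul_sq_add_mul_cube_le r d
      _ ≤ w ^ 3 := by gcongr
      _ ≤ w ^ 3 * (w / 4) := le_mul_of_one_le_right (by positivity) (by linarith)
      _ = w ^ 4 / 4 := by ring
  calc _ = 2 ^ (r + 1) * d ^ 2 * ((n : ℝ) ^ (2 * r - 1) / m ^ 2) +
        (r + 1) ^ 2 * d ^ 3 * ((n : ℝ) ^ (3 * r - 1) / m ^ 3) := by ring
    _ ≤ 2 ^ (r + 1) * d ^ 2 * (1 / w ^ 4) + (r + 1) ^ 2 * d ^ 3 * (1 / w ^ 4) := by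
        gcongr ?_ * ?_ + ?_ * ?_
        · exact hratio (2 * r - 1) 2 (by omega)
        · exact hratio (3 * r - 1) 3 (by omega)
    _ = (2 ^ (r + 1) * d ^ 2 + (r + 1) ^ 2 * d ^ 3) / w ^ 4 := by ring
    _ ≤ 1 / 4 := by rw [div_le_iff₀ (by positivity)]; linarith

lemma inv_sq_le_exp_neg_two_mul_pow {y : ℝ} (hw : 0 < w) (hy : r * y ≤ Real.log w) :
    (w ^ 2)⁻¹ ≤ Real.exp (-2 * y) ^ r := by
  rw [← Real.exp_nat_mul, ← Real.exp_log (inv_pos.2 (pow_pos hw 2)), Real.log_inv, Real.log_pow]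
  gcongr
  push_cast
  linarith

lemma two_mul_mul_pow_le_mul_log (hr : 1 ≤ r) (hw : 1 ≤ w) (hm : m = w ^ (16 * r - 4))
    (hs : 32 * r ^ 2 * d * s ^ r ≤ m * Real.log m) :
    2 * r * (d * s ^ r) ≤ m * Real.log w := by
  have hm₀ : 0 < m := by subst hm; positivity
  have hL₀ : 0 ≤ Real.log w := Real.log_nonneg hw
  have hlog : Real.log m ≤ 16 * r * Real.log w := by
    rw [hm, Real.log_pow]
    gcongr
    exact_mod_cast Nat.sub_le _ _
  refine le_of_mul_le_mul_left ?_ (show (0 : ℝ) < 16 * r by positivity)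
  calc (16 * r * (2 * r * (d * s ^ r)) : ℝ) = 32 * r ^ 2 * d * s ^ r := by ring
    _ ≤ m * (16 * r * Real.log w) := hs.trans (by gcongr)
    _ = 16 * r * (m * Real.log w) := by ring

lemma four_mul_lt_exp_mul_succ (hr : 1 ≤ r) (hd : 1 ≤ d) (hw : 4 ^ (r + 1) ≤ w)
    (hm : m = w ^ (16 * r - 4)) (hn : w ^ 16 < n + 1)
    (hs : 32 * r ^ 2 * d * s ^ r ≤ m * Real.log m) :
    (4 * s : ℝ) < Real.exp (-2 * (2 * d * s ^ r / m)) * (n + 1) := by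
  have hd' : (1 : ℝ) ≤ d := by exact_mod_cast hd
  have hr' : (1 : ℝ) ≤ r := by exact_mod_cast hr
  have hw₀ : 0 < w := lt_of_lt_of_le (by positivity) hw
  have hw₁ : 1 ≤ w := (one_le_pow₀ (by norm_num)).trans hw
  have hm₀ : 0 < m := by subst hm; positivity
  set L := Real.log w
  have hpow : 2 * r * (d * s ^ r) ≤ m * L := two_mul_mul_pow_le_mul_log hr hw₁ hm hs
  have hexp : (w ^ 2)⁻¹ ≤ Real.exp (-2 * (2 * d * s ^ r / m)) ^ r := by
    refine inv_sq_le_exp_neg_two_mul_pow hw₀ ?_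
    rw [mul_div_assoc', div_le_iff₀ hm₀]
    linarith
  have : 0 ≤ L := Real.log_nonneg hw₁
  have hLw : L < w := (Real.log_le_sub_one_of_pos hw₀).trans_lt (sub_one_lt w)
  have hmw : m * w ^ 4 = w ^ (16 * r) := by
    rw [hm, ← pow_add]
    congr 1
    omega
  refine lt_of_pow_lt_pow_left₀ r (by positivity) ?_
  calc (4 * s : ℝ) ^ r = 4 ^ r * s ^ r := mul_pow _ _ _
    _ ≤ 4 ^ r * (2 * r * (d * s ^ r)) := by
        gcongr
        nlinarith [mul_le_mul hr' hd' zero_le_one (by linarith), show (0 : ℝ) ≤ s ^ r by positivity]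
    _ ≤ 4 ^ r * (m * L) := by gcongr
    _ < 4 ^ (r + 1) * (m * w) := by
        gcongr
        · norm_num
        · omega
    _ ≤ w * (m * w) := by gcongr
    _ = (w ^ 2)⁻¹ * (w ^ 16) ^ r := by
        rw [← pow_mul, ← hmw]
        field_simp
    _ ≤ Real.exp (-2 * (2 * d * s ^ r / m)) ^ r * (n + 1) ^ r := by gcongr
    _ = _ := (mul_pow _ _ _).symm

variable {V : Type*} [DecidableEq V] [Fintype V] {𝒬 : Finset (Finset V)}

lemma exists_le_eq_pow_of_pow_le {a x : ℝ} {k : ℕ} (hk : k ≠ 0) (ha : 0 ≤ a) (h : a ^ k ≤ x) :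
    ∃ w, a ≤ w ∧ x = w ^ k := by
  have hx : 0 ≤ x := (pow_nonneg ha k).trans h
  have hpow : (x ^ (k : ℝ)⁻¹) ^ k = x := Real.rpow_inv_natCast_pow hx hk
  exact ⟨_, le_of_pow_le_pow_left₀ hk (by positivity) (hpow.symm ▸ h), hpow.symm⟩

theorem exists_mem_indepSets_card_eq (h𝒬 : (𝒬 : Set (Finset V)).Sized (r + 1)) (hr : 2 ≤ r)
    (hd₁ : 1 ≤ d) (hd : ∀ U : Finset V, #U = r → codegree 𝒬 U ≤ d)
    (hV : (4 ^ (r + 2) * d) ^ (16 * r - 4) ≤ Fintype.card V)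
    (hs : (32 * r ^ 2 * d * s ^ r : ℝ) ≤ Fintype.card V * Real.log (Fintype.card V)) :
    ∃ I ∈ indepSets 𝒬 univ, #I = s := by
  by_contra! hcon
  set m := Fintype.card V
  have hsmall : ∀ I ∈ indepSets 𝒬 univ, #I ≤ s := fun I hI => by
    by_contra! hlt
    obtain ⟨J, hJI, hJ⟩ := exists_subset_card_eq hlt.le
    exact hcon J (isLowerSet_indepSets 𝒬 univ hJI hI) hJ
  obtain ⟨w, hw, hmw⟩ : ∃ w : ℝ, 4 ^ (r + 2) * d ≤ w ∧ (m : ℝ) = w ^ (16 * r - 4) :=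
    exists_le_eq_pow_of_pow_le (by omega) (by positivity) (by exact_mod_cast hV)
  have hd' : (1 : ℝ) ≤ d := by exact_mod_cast hd₁
  have hw' : 4 ^ (r + 2) ≤ w := (le_mul_of_one_le_right (by positivity) hd').trans hw
  have hw₁ : 4 ≤ w := (le_self_pow₀ (by norm_num) (by omega)).trans hw'
  set n := ⌊w ^ 16⌋₊
  have hn : (n : ℝ) ≤ w ^ 16 := Nat.floor_le (by positivity)
  have hn₁ : 1 ≤ n := Nat.le_floor (by rw [Nat.cast_one]; exact one_le_pow₀ (by linarith))
  have hnm : 4 * n ≤ m := by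
    have hreal : (4 * n : ℝ) ≤ m := by
      calc (4 * n : ℝ) ≤ w * w ^ 16 := by gcongr
        _ = w ^ 17 := by ring
        _ ≤ w ^ (16 * r - 4) := pow_le_pow_right₀ (by linarith) (by omega)
        _ = m := hmw.symm
    exact_mod_cast hreal
  have hm₀ : 0 < m := by omega
  have hbad : ∀ v, (#{Y ∈ (univ : Finset V).powersetCard n |
      v ∉ Y ∧ ¬ MeetsSimply 𝒬 (𝒬.memberSubfamily v) Y} : ℝ) ≤ m.choose n / 4 := fun v => by
    refine (card_filter_not_meetsSimply_le h𝒬 hd hr hn₁ (by omega) v).trans ?_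
    rw [div_eq_mul_one_div (m.choose n : ℝ) 4]
    gcongr
    exact add_mul_pow_div_le_quarter hr hd₁ hw hmw hn
  have hupper := exp_mul_succ_le_of_forall_card_le h𝒬 (by omega) hd hm₀ hsmall hnm hbad
  have hlower := four_mul_lt_exp_mul_succ (s := s) (by omega) hd₁
    ((pow_le_pow_right₀ (by norm_num) (by omega)).trans hw') hmw (Nat.lt_floor_add_one _) hs
  exact absurd hupper hlower.not_ge

end IndependenceNumber

section RainbowCliques

open Finset

variable {V W : Type*} {G : SimpleGraph V} {H : SimpleGraph W} {c : Sym2 V → ℕ}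

/-- The edges of `G` with both ends in `X` receive pairwise distinct colors. -/
def IsRainbowOn (G : SimpleGraph V) (c : Sym2 V → ℕ) (X : Set V) : Prop :=
  Set.InjOn c {e ∈ G.edgeSet | ∀ v ∈ e, v ∈ X}

lemma IsRainbowOn.hasRainbowCopy {X : Set V} (h : IsRainbowOn G c X) (f : H →g G)
    (hf : Function.Injective f) (hX : ∀ w, f w ∈ X) : HasRainbowCopy G H c := by
  have hmaps : ∀ e ∈ H.edgeSet, e.map f ∈ {e ∈ G.edgeSet | ∀ v ∈ e, v ∈ X} := by
    refine fun e he => ⟨f.map_mem_edgeSet he, fun v hv => ?_⟩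
    obtain ⟨w, -, rfl⟩ := Sym2.mem_map.1 hv
    exact hX w
  exact ⟨f, hf, fun e he e' he' hc => Sym2.map.injective hf (h (hmaps e he) (hmaps e' he') hc)⟩

lemma IsProperEdgeColoring.injOn_neighborSet (hc : IsProperEdgeColoring G c) (v : V) :
    Set.InjOn (fun w => c s(v, w)) (G.neighborSet v) := by
  intro w hw w' hw' h
  by_contra hne
  exact hc s(v, w) hw s(v, w') hw' (fun heq => hne (Sym2.congr_right.1 heq))
    ⟨v, Sym2.mem_mk_left v w, Sym2.mem_mk_left v w'⟩ h

section Quads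

variable [DecidableEq V]

lemma injective_sym2_toFinset : Function.Injective (Sym2.toFinset : Sym2 V → Finset V) :=
  fun e f h => Sym2.ext fun v => by rw [← Sym2.mem_toFinset, h, Sym2.mem_toFinset]

variable [Fintype V]

open Classical in
/-- The vertex sets of the pairs of disjoint edges of `G` of equal color; a vertex set containing
none of them spans a rainbow subgraph when the coloring is proper. -/
noncomputable def monochromaticQuads (G : SimpleGraph V) (c : Sym2 V → ℕ) : Finset (Finset V) :=
  {Q ∈ univ.powersetCard 4 | ∃ e ∈ G.edgeSet, ∃ f ∈ G.edgeSet,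
    c e = c f ∧ e.toFinset ∪ f.toFinset = Q}

lemma mem_monochromaticQuads {Q : Finset V} : Q ∈ monochromaticQuads G c ↔ #Q = 4 ∧
    ∃ e ∈ G.edgeSet, ∃ f ∈ G.edgeSet, c e = c f ∧ e.toFinset ∪ f.toFinset = Q := by
  simp only [monochromaticQuads, mem_filter, mem_powersetCard_univ]

lemma sized_monochromaticQuads (G : SimpleGraph V) (c : Sym2 V → ℕ) :
    (monochromaticQuads G c : Set (Finset V)).Sized 4 := fun _ hQ =>
  (mem_monochromaticQuads.1 hQ).1

lemma isRainbowOn_of_mem_indepSets (hc : IsProperEdgeColoring G c) {I : Finset V}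
    (hI : I ∈ indepSets (monochromaticQuads G c) univ) : IsRainbowOn G c I := by
  rintro e ⟨he, heI⟩ f ⟨hf, hfI⟩ hcol
  by_contra hne
  have hdisj : Disjoint e.toFinset f.toFinset := disjoint_left.2 fun v hve hvf =>
    hc e he f hf hne ⟨v, Sym2.mem_toFinset.1 hve, Sym2.mem_toFinset.1 hvf⟩ hcol
  have hcard : #(e.toFinset ∪ f.toFinset) = 4 := by
    rw [card_union_of_disjoint hdisj,
      Sym2.card_toFinset_of_not_isDiag e (G.not_isDiag_of_mem_edgeSet he),
      Sym2.card_toFinset_of_not_isDiag f (G.not_isDiag_of_mem_edgeSet hf)]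
  refine (mem_indepSets.1 hI).2 (e.toFinset ∪ f.toFinset)
    (mem_monochromaticQuads.2 ⟨hcard, e, he, f, hf, hcol, rfl⟩) (union_subset ?_ ?_)
  · exact fun v hv => heI v (Sym2.mem_toFinset.1 hv)
  · exact fun v hv => hfI v (Sym2.mem_toFinset.1 hv)

lemma exists_edge_of_mem_monochromaticQuads {Q : Finset V} {v : V}
    (hQ : Q ∈ monochromaticQuads G c) (hv : v ∈ Q) :
    ∃ a ∈ Q.erase v, G.Adj a v ∧ ∃ f : Sym2 V, f.toFinset = (Q.erase v).erase a ∧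
      c s(a, v) = c f := by
  obtain ⟨hcard, e, he, f, hf, hcol, rfl⟩ := mem_monochromaticQuads.1 hQ
  wlog hve : v ∈ e.toFinset generalizing e f
  · rw [union_comm] at hv hQ hcard ⊢
    exact this f hf e he hcol.symm hQ hv hcard ((mem_union.1 hv).resolve_right hve)
  have hdisj : Disjoint e.toFinset f.toFinset := by
    rw [← card_union_eq_card_add_card, hcard,
      Sym2.card_toFinset_of_not_isDiag e (G.not_isDiag_of_mem_edgeSet he),
      Sym2.card_toFinset_of_not_isDiag f (G.not_isDiag_of_mem_edgeSet hf)]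
  obtain ⟨a, rfl⟩ := Sym2.mem_iff_exists.1 (Sym2.mem_toFinset.1 hve)
  have hav : G.Adj a v := (G.mem_edgeSet.1 he).symm
  rw [Sym2.toFinset_mk_eq] at hdisj ⊢
  refine ⟨a, ?_, hav, f, ?_, ?_⟩
  · exact mem_erase.2 ⟨hav.ne, mem_union_left _ (mem_insert_of_mem (mem_singleton_self a))⟩
  · rw [disjoint_insert_left, disjoint_singleton_left] at hdisj
    grind
  · rw [Sym2.eq_swap, hcol]

-- A quad containing a triple `U` adds a vertex joined to some `a ∈ U` by an edge of the same color
-- as the pair `U.erase a`; by properness this vertex is determined by `a`.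
lemma codegree_monochromaticQuads_le (hc : IsProperEdgeColoring G c) {U : Finset V} (hU : #U = 3) :
    codegree (monochromaticQuads G c) U ≤ 3 := by
  have hadds : ∀ Q ∈ {Q ∈ monochromaticQuads G c | U ⊆ Q}, ∃ a ∈ U, ∃ v, insert v U = Q ∧
      G.Adj a v ∧ ∃ f : Sym2 V, f.toFinset = U.erase a ∧ c s(a, v) = c f := by
    intro Q hQ
    obtain ⟨hQ, hUQ⟩ := mem_filter.1 hQ
    obtain ⟨v, hvU, rfl⟩ : ∃ v ∉ U, insert v U = Q := by
      refine exists_eq_insert_iff.2 ⟨hUQ, ?_⟩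
      rw [hU, sized_monochromaticQuads G c hQ]
    obtain ⟨a, haU, hav, f, hf, hcol⟩ :=
      exists_edge_of_mem_monochromaticQuads hQ (mem_insert_self v U)
    rw [erase_insert hvU] at haU hf
    exact ⟨a, haU, v, rfl, hav, f, hf, hcol⟩
  rw [codegree, ← hU]
  refine card_le_card_of_forall_subsingleton _ hadds fun a _ => ?_
  rintro _ ⟨-, v, rfl, hav, f, hf, hcol⟩ _ ⟨-, v', rfl, hav', f', hf', hcol'⟩
  have hff' : f = f' := injective_sym2_toFinset (hf.trans hf'.symm)
  subst hff'
  rw [hc.injOn_neighborSet a hav hav' (hcol.trans hcol'.symm)]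

end Quads

theorem exists_isRainbowOn_card_eq [Fintype V] (hc : IsProperEdgeColoring G c) {s : ℕ} (hs : 2 ≤ s)
    (hV : 3072 ^ 44 * (s ^ 3 / Real.log s) ≤ Fintype.card V) :
    ∃ I : Finset V, IsRainbowOn G c I ∧ #I = s := by
  classical
  set m := Fintype.card V
  have hs' : (2 : ℝ) ≤ s := by exact_mod_cast hs
  have hlog : 0 < Real.log s := Real.log_pos (by linarith)
  have hle : (s : ℝ) ≤ s ^ 3 / Real.log s := by
    rw [le_div_iff₀ hlog]
    have hlogle := Real.log_le_self (show (0 : ℝ) ≤ s by linarith)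
    nlinarith [mul_le_mul_of_nonneg_left hlogle (show (0 : ℝ) ≤ s by linarith)]
  have hratio : (s : ℝ) ^ 3 / Real.log s ≤ m :=
    (le_mul_of_one_le_left (by positivity) (by norm_num)).trans hV
  have hbig : (3072 : ℝ) ^ 44 ≤ m :=
    (le_mul_of_one_le_right (by positivity) (by linarith)).trans hV
  have : (0 : ℝ) < m := by linarith
  have hthreshold : (4 ^ (3 + 2) * 3) ^ (16 * 3 - 4) ≤ m := by
    norm_num at hbig ⊢
    exact_mod_cast hbig
  have hlarge : (32 * (3 : ℕ) ^ 2 * (3 : ℕ) * s ^ 3 : ℝ) ≤ m * Real.log m := by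
    calc _ ≤ 3072 ^ 44 * (s : ℝ) ^ 3 := by gcongr; norm_num
      _ = 3072 ^ 44 * (s ^ 3 / Real.log s) * Real.log s := by field_simp
      _ ≤ m * Real.log m := by
        have hsm : (s : ℝ) ≤ m := hle.trans hratio
        gcongr
  obtain ⟨I, hI, hIs⟩ := exists_mem_indepSets_card_eq (sized_monochromaticQuads G c)
    (by norm_num) (by norm_num) (fun _ => codegree_monochromaticQuads_le hc) hthreshold hlarge
  exact ⟨I, isRainbowOn_of_mem_indepSets hc hI, hIs⟩

end RainbowCliques

section Arrowing

variable {U V W : Type*} {G : SimpleGraph V} {G' : SimpleGraph U} {H : SimpleGraph W}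

lemma IsProperEdgeColoring.comap {c : Sym2 V → ℕ} (hc : IsProperEdgeColoring G c) (f : G' →g G)
    (hf : Function.Injective f) : IsProperEdgeColoring G' (c ∘ Sym2.map f) := by
  rintro e₁ h₁ e₂ h₂ hne ⟨v, hv₁, hv₂⟩
  exact hc _ (f.map_mem_edgeSet h₁) _ (f.map_mem_edgeSet h₂)
    (fun h => hne (Sym2.map.injective hf h))
    ⟨f v, Sym2.mem_map.2 ⟨v, hv₁, rfl⟩, Sym2.mem_map.2 ⟨v, hv₂, rfl⟩⟩

lemma ArrowsTo.mono_left (h : ArrowsTo G' H) (hG : G' ⊑ G) : ArrowsTo G H := by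
  obtain ⟨g, hg⟩ := hG
  intro c hc
  obtain ⟨f, hf, hrainbow⟩ := h _ (hc.comap g hg)
  refine ⟨g.comp f, hg.comp hf, fun e₁ h₁ e₂ h₂ heq => hrainbow e₁ h₁ e₂ h₂ ?_⟩
  rw [Function.comp_apply, Function.comp_apply, Sym2.map_map, Sym2.map_map]
  exact heq

lemma ArrowsTo.mono_right (h : ArrowsTo G G') (hH : H ⊑ G') : ArrowsTo G H := by
  obtain ⟨g, hg⟩ := hH
  intro c hc
  obtain ⟨f, hf, hrainbow⟩ := h c hc
  refine ⟨f.comp g, hf.comp hg, fun e₁ h₁ e₂ h₂ heq => Sym2.map.injective hg ?_⟩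
  refine hrainbow _ (g.map_mem_edgeSet h₁) _ (g.map_mem_edgeSet h₂) ?_
  rw [Sym2.map_map, Sym2.map_map]
  exact heq

lemma ArrowsTo.ARs_le_ncard_edgeSet [Finite V] (h : ArrowsTo G H) :
    ARs H ≤ G.edgeSet.ncard := by
  have := Fintype.ofFinite V
  let φ : G ≃g G.overFin rfl := G.overFinIso rfl
  exact Nat.sInf_le ⟨_, _, h.mono_left ⟨φ.toCopy⟩, (Nat.card_congr φ.mapEdgeSet).symm⟩

lemma top_arrowsTo_top [Fintype V] [Fintype W] (hW : 2 ≤ Fintype.card W)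
    (hV : 3072 ^ 44 * ((Fintype.card W : ℝ) ^ 3 / Real.log (Fintype.card W)) ≤ Fintype.card V) :
    ArrowsTo (⊤ : SimpleGraph V) (⊤ : SimpleGraph W) := by
  intro c hc
  obtain ⟨I, hI, hcard⟩ := exists_isRainbowOn_card_eq hc hW hV
  obtain ⟨e⟩ : Nonempty (W ≃ I) := Fintype.card_eq.1 (by rw [Fintype.card_coe, hcard])
  let f : W ↪ V := e.toEmbedding.trans (Function.Embedding.subtype _)
  exact hI.hasRainbowCopy (Embedding.completeGraph f).toHom f.injective fun w => (e w).2

lemma exists_arrowsTo [Finite W] (H : SimpleGraph W) :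
    ∃ (n : ℕ) (G : SimpleGraph (Fin n)), ArrowsTo G H := by
  have := Fintype.ofFinite W
  set s := Fintype.card W + 2
  obtain ⟨n, hn⟩ := exists_nat_ge (3072 ^ 44 * ((s : ℝ) ^ 3 / Real.log s))
  have hH : H ⊑ (⊤ : SimpleGraph (Fin s)) :=
    isContained_top_iff.2 (Function.Embedding.nonempty_of_card_le (by simp [s]))
  have hclique : ArrowsTo (⊤ : SimpleGraph (Fin n)) (⊤ : SimpleGraph (Fin s)) :=
    top_arrowsTo_top (by simp [s]) (by simpa only [Fintype.card_fin] using hn)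
  exact ⟨n, ⊤, hclique.mono_right hH⟩

lemma ARs_mono [Finite U] (h : H ⊑ G') : ARs H ≤ ARs G' := by
  obtain ⟨n, G, hG⟩ := exists_arrowsTo G'
  obtain ⟨n', G₀, hG₀, hcard⟩ : ARs G' ∈ {m | ∃ (n : ℕ) (G : SimpleGraph (Fin n)),
      ArrowsTo G G' ∧ G.edgeSet.ncard = m} := Nat.sInf_mem ⟨_, n, G, hG, rfl⟩
  exact Nat.sInf_le ⟨n', G₀, hG₀.mono_right h, hcard⟩

end Arrowing

section CompleteSplitGraphs

open Finset

variable {m N s t : ℕ}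

lemma Kst_adj_iff {x y : Fin s ⊕ Fin t} :
    (Kst s t).Adj x y ↔ x ≠ y ∧ (x.isLeft = true ∨ y.isLeft = true) :=
  SimpleGraph.fromRel_adj _ _ _

lemma Kst_adj_inl {a : Fin s} {x : Fin s ⊕ Fin t} : (Kst s t).Adj (.inl a) x ↔ .inl a ≠ x := by
  simp only [Kst_adj_iff, Sum.isLeft_inl, true_or, and_true]

lemma exists_eq_inl_of_mem_edgeSet_Kst {e : Sym2 (Fin s ⊕ Fin t)} (he : e ∈ (Kst s t).edgeSet) :
    ∃ a x, e = s(Sum.inl a, x) := by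
  induction e with
  | _ x y =>
    obtain ⟨-, hx | hy⟩ := Kst_adj_iff.1 he
    · obtain ⟨a, rfl⟩ := Sum.isLeft_iff.1 hx
      exact ⟨a, y, rfl⟩
    · obtain ⟨a, rfl⟩ := Sum.isLeft_iff.1 hy
      exact ⟨a, x, Sym2.eq_swap⟩

lemma ncard_edgeSet_Kst_le (s t : ℕ) : (Kst s t).edgeSet.ncard ≤ s * (s + t) := by
  have hsub : (Kst s t).edgeSet ⊆
      Set.range fun p : Fin s × (Fin s ⊕ Fin t) => s(Sum.inl p.1, p.2) := by
    intro e he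
    obtain ⟨a, x, rfl⟩ := exists_eq_inl_of_mem_edgeSet_Kst he
    exact ⟨(a, x), rfl⟩
  calc (Kst s t).edgeSet.ncard
      ≤ (Set.range fun p : Fin s × (Fin s ⊕ Fin t) => s(Sum.inl p.1, p.2)).ncard :=
        Set.ncard_le_ncard hsub
    _ ≤ Nat.card (Fin s × (Fin s ⊕ Fin t)) := Finite.card_range_le _
    _ = s * (s + t) := by simp

lemma exists_Kst_hom_eq_sumMap (f : Fin s ↪ Fin m) (g : Fin t ↪ Fin N) :
    ∃ φ : Kst s t →g Kst m N, ⇑φ = Sum.map f g := by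
  refine ⟨⟨Sum.map f g, fun {x y} h => ?_⟩, rfl⟩
  rw [Kst_adj_iff] at h ⊢
  simpa only [Sum.isLeft_map, ne_eq, (f.injective.sumMap g.injective).eq_iff] using h

lemma hasRainbowCopy_Kst {c : Sym2 (Fin m ⊕ Fin N) → ℕ} {S : Finset (Fin m)} {T : Finset (Fin N)}
    (h : IsRainbowOn (Kst m N) c (S.disjSum T)) :
    HasRainbowCopy (Kst m N) (Kst #S #T) c := by
  obtain ⟨φ, hφ⟩ := exists_Kst_hom_eq_sumMap (S.orderEmbOfFin rfl).toEmbedding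
    (T.orderEmbOfFin rfl).toEmbedding
  refine h.hasRainbowCopy φ ?_ ?_
  · rw [hφ]
    exact (S.orderEmbOfFin rfl).injective.sumMap (T.orderEmbOfFin rfl).injective
  · rw [hφ]
    rintro (a | b) <;> simp

lemma isContained_Kst_of_cover {W : Type*} [Fintype W] {H : SimpleGraph W} (S : Finset W)
    (hS : ∀ e ∈ H.edgeSet, ∃ v ∈ S, v ∈ e) : H ⊑ Kst #S (Fintype.card W - #S) := by
  classical
  let eS : S ≃ Fin #S := S.equivFin
  let eT : {v // v ∉ S} ≃ Fin (Fintype.card W - #S) :=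
    Fintype.equivFinOfCardEq (by rw [Fintype.card_subtype_compl, Fintype.card_coe])
  let e : W ≃ Fin #S ⊕ Fin (Fintype.card W - #S) :=
    (Equiv.sumCompl (· ∈ S)).symm.trans (eS.sumCongr eT)
  have hleft : ∀ v ∈ S, (e v).isLeft = true := fun v hv => by
    simp [e, Equiv.sumCompl_symm_apply_of_pos hv]
  refine ⟨⟨⟨e, fun {v w} hvw => Kst_adj_iff.2 ⟨e.injective.ne hvw.ne, ?_⟩⟩, e.injective⟩⟩
  obtain ⟨u, hu, hmem⟩ := hS s(v, w) hvw
  obtain rfl | rfl := Sym2.mem_iff.1 hmem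
  · exact .inl (hleft _ hu)
  · exact .inr (hleft _ hu)

lemma exists_cover_card_eq_coverNumber {W : Type*} [Finite W] (H : SimpleGraph W) :
    ∃ S : Finset W, #S = coverNumber H ∧ ∀ e ∈ H.edgeSet, ∃ v ∈ S, v ∈ e := by
  have huniv : ∀ e ∈ H.edgeSet, ∃ v ∈ Set.univ, v ∈ e := fun e _ =>
    ⟨_, Set.mem_univ _, e.out_fst_mem⟩
  obtain ⟨S, hfin, hcard, hS⟩ : coverNumber H ∈
      {m | ∃ S : Set W, S.Finite ∧ S.ncard = m ∧ ∀ e ∈ H.edgeSet, ∃ v ∈ S, v ∈ e} :=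
    Nat.sInf_mem ⟨_, Set.univ, Set.finite_univ, rfl, huniv⟩
  lift S to Finset W using hfin
  exact ⟨S, by rwa [Set.ncard_coe_finset] at hcard, hS⟩

end CompleteSplitGraphs

section GreedyExtension

open Finset

protected lemma IsRainbowOn.insert {V : Type*} {G : SimpleGraph V} {c : Sym2 V → ℕ} {X : Set V}
    {w : V} (h : IsRainbowOn G c X) (hc : IsProperEdgeColoring G c)
    (hw : ∀ v ∈ X, G.Adj w v → ∀ e ∈ G.edgeSet, (∀ u ∈ e, u ∈ X) → c e ≠ c s(w, v)) :
    IsRainbowOn G c (insert w X) := by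
  have hcases : ∀ e ∈ {e ∈ G.edgeSet | ∀ v ∈ e, v ∈ insert w X},
      (∀ v ∈ e, v ∈ X) ∨ ∃ v ∈ X, G.Adj w v ∧ e = s(w, v) := by
    rintro e ⟨he, heX⟩
    by_cases hwe : w ∈ e
    · obtain ⟨v, rfl⟩ := Sym2.mem_iff_exists.1 hwe
      have hwv : G.Adj w v := he
      exact .inr ⟨v, (heX v (Sym2.mem_mk_right w v)).resolve_left hwv.ne', hwv, rfl⟩
    · exact .inl fun v hv => (heX v hv).resolve_left fun heq => hwe (heq ▸ hv)
  intro e he f hf hcol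
  obtain heX | ⟨v, hv, hwv, rfl⟩ := hcases e he <;> obtain hfX | ⟨v', hv', hwv', rfl⟩ := hcases f hf
  · exact h ⟨he.1, heX⟩ ⟨hf.1, hfX⟩ hcol
  · exact absurd hcol (hw v' hv' hwv' e he.1 heX)
  · exact absurd hcol.symm (hw v hv hwv f hf.1 hfX)
  · rw [hc.injOn_neighborSet w hwv hwv' hcol]

lemma isRainbowOn_range {V W : Type*} {G : SimpleGraph V} {c : Sym2 V → ℕ} {f : W → V}
    (hf : ∀ e ∈ (⊤ : SimpleGraph W).edgeSet, ∀ e' ∈ (⊤ : SimpleGraph W).edgeSet,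
      c (e.map f) = c (e'.map f) → e = e') : IsRainbowOn G c (Set.range f) := by
  have hlift : ∀ e ∈ {e ∈ G.edgeSet | ∀ v ∈ e, v ∈ Set.range f},
      ∃ d ∈ (⊤ : SimpleGraph W).edgeSet, d.map f = e := by
    intro e
    induction e with
    | _ x y =>
      rintro ⟨he, heX⟩
      obtain ⟨a, rfl⟩ := heX x (Sym2.mem_mk_left x y)
      obtain ⟨b, rfl⟩ := heX y (Sym2.mem_mk_right _ y)
      exact ⟨s(a, b), fun hab => G.ne_of_adj he (congrArg f hab), rfl⟩
  intro e he e' he' hcol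
  obtain ⟨d, hd, rfl⟩ := hlift e he
  obtain ⟨d', hd', rfl⟩ := hlift e' he'
  rw [hf d hd d' hd' hcol]

variable {m N s t : ℕ} {c : Sym2 (Fin m ⊕ Fin N) → ℕ} {S : Finset (Fin m)} {T : Finset (Fin N)}

lemma exists_forall_color_notMem (hc : IsProperEdgeColoring (Kst m N) c) (S : Finset (Fin m))
    {D : Finset ℕ} (hD : #S * #D < N) : ∃ j, ∀ a ∈ S, c s(Sum.inl a, Sum.inr j) ∉ D := by
  by_contra! hall
  have hcard : #(univ : Finset (Fin N)) ≤ #(S ×ˢ D) := by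
    refine card_le_card_of_forall_subsingleton
      (fun j (p : Fin m × ℕ) => c s(Sum.inl p.1, Sum.inr j) = p.2) (fun j _ => ?_) ?_
    · obtain ⟨a, ha, hcol⟩ := hall j
      exact ⟨(a, _), mem_product.2 ⟨ha, hcol⟩, rfl⟩
    · rintro ⟨a, d⟩ - j ⟨-, hj⟩ j' ⟨-, hj'⟩
      exact Sum.inr_injective (hc.injOn_neighborSet (.inl a) (Kst_adj_inl.2 Sum.inl_ne_inr)
        (Kst_adj_inl.2 Sum.inl_ne_inr) (hj.trans hj'.symm))
  rw [card_univ, Fintype.card_fin, card_product] at hcard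
  exact hD.not_ge hcard

lemma exists_isRainbowOn_disjSum_insert (hc : IsProperEdgeColoring (Kst m N) c)
    (h : IsRainbowOn (Kst m N) c (S.disjSum T)) (hS : S.Nonempty)
    (hN : #S * (#S * (#S + #T)) < N) :
    ∃ j ∉ T, IsRainbowOn (Kst m N) c (S.disjSum (insert j T)) := by
  set D : Finset ℕ := (S ×ˢ S.disjSum T).image fun p => c s(Sum.inl p.1, p.2)
  have hmemD : ∀ a ∈ S, ∀ x ∈ S.disjSum T, c s(Sum.inl a, x) ∈ D := fun a ha x hx =>
    mem_image.2 ⟨(a, x), mem_product.2 ⟨ha, hx⟩, rfl⟩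
  have hcardD : #D ≤ #S * (#S + #T) :=
    card_image_le.trans_eq (by rw [card_product, card_disjSum])
  obtain ⟨j, hj⟩ := exists_forall_color_notMem hc S ((Nat.mul_le_mul_left _ hcardD).trans_lt hN)
  refine ⟨j, fun hjT => ?_, ?_⟩
  · obtain ⟨a, ha⟩ := hS
    exact hj a ha (hmemD a ha _ (inr_mem_disjSum.2 hjT))
  · have hinsert : (S.disjSum (insert j T) : Set (Fin m ⊕ Fin N)) =
        insert (.inr j) (S.disjSum T : Set (Fin m ⊕ Fin N)) := by
      ext (a | b) <;> simp
    rw [hinsert]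
    refine h.insert hc fun v hv hadj e he heX hcol => ?_
    obtain ⟨a, rfl⟩ : ∃ a, v = Sum.inl a := Sum.isLeft_iff.1 (by simpa using (Kst_adj_iff.1 hadj).2)
    obtain ⟨b, x, rfl⟩ := exists_eq_inl_of_mem_edgeSet_Kst he
    refine hj a (inl_mem_disjSum.1 hv) ?_
    rw [Sym2.eq_swap, ← hcol]
    exact hmemD b (inl_mem_disjSum.1 (heX _ (Sym2.mem_mk_left _ x))) x
      (heX x (Sym2.mem_mk_right _ x))

lemma exists_isRainbowOn_disjSum (hc : IsProperEdgeColoring (Kst m N) c)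
    (h : IsRainbowOn (Kst m N) c (S.disjSum (∅ : Finset (Fin N)))) (hS : S.Nonempty) (t : ℕ)
    (hN : #S * (#S * (#S + t)) ≤ N) :
    ∃ T : Finset (Fin N), IsRainbowOn (Kst m N) c (S.disjSum T) ∧ #T = t := by
  induction t with
  | zero => exact ⟨∅, h, card_empty⟩
  | succ t ih =>
    have hlt : #S * (#S * (#S + t)) < #S * (#S * (#S + (t + 1))) := by
      have := hS.card_pos
      gcongr
      exact Nat.lt_succ_self t
    obtain ⟨T, hT, hcard⟩ := ih (hlt.le.trans hN)
    obtain ⟨j, hj, hrainbow⟩ :=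
      exists_isRainbowOn_disjSum_insert hc hT hS (by rw [hcard]; exact hlt.trans_le hN)
    exact ⟨insert j T, hrainbow, by rw [card_insert_of_notMem hj, hcard]⟩

lemma exists_isRainbowOn_disjSum_empty
    (hclique : ArrowsTo (⊤ : SimpleGraph (Fin m)) (⊤ : SimpleGraph (Fin s)))
    (hc : IsProperEdgeColoring (Kst m N) c) :
    ∃ S : Finset (Fin m), IsRainbowOn (Kst m N) c (S.disjSum (∅ : Finset (Fin N))) ∧ #S = s := by
  let ι : (⊤ : SimpleGraph (Fin m)) →g Kst m N :=
    ⟨Sum.inl, fun h => Kst_adj_inl.2 (Sum.inl_injective.ne h)⟩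
  obtain ⟨f, hf, hrainbow⟩ := hclique _ (hc.comap ι Sum.inl_injective)
  refine ⟨univ.map ⟨f, hf⟩, ?_, by rw [card_map, card_fin]⟩
  have hrange : ((univ.map ⟨f, hf⟩).disjSum (∅ : Finset (Fin N)) : Set (Fin m ⊕ Fin N)) =
      Set.range (ι ∘ f) := by
    ext (a | b) <;> simp [ι]
  rw [hrange]
  refine isRainbowOn_range fun e he e' he' hcol => hrainbow e he e' he' ?_
  rwa [Function.comp_apply, Function.comp_apply, Sym2.map_map, Sym2.map_map]

theorem ArrowsTo.Kst_arrowsTo_Kst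
    (hclique : ArrowsTo (⊤ : SimpleGraph (Fin m)) (⊤ : SimpleGraph (Fin s))) (hs : 0 < s)
    (hN : s * (s * (s + t)) ≤ N) : ArrowsTo (Kst m N) (Kst s t) := by
  intro c hc
  obtain ⟨S, hS, rfl⟩ := exists_isRainbowOn_disjSum_empty hclique hc
  obtain ⟨T, hT, rfl⟩ := exists_isRainbowOn_disjSum hc hS (card_pos.1 hs) t hN
  exact hasRainbowCopy_Kst hT

end GreedyExtension

section SizeAntiRamsey

lemma ARs_le_ARs_Kst_coverNumber {W : Type*} [Fintype W] (H : SimpleGraph W) :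
    ARs H ≤ ARs (Kst (coverNumber H) (Fintype.card W - coverNumber H)) := by
  obtain ⟨S, hcard, hS⟩ := exists_cover_card_eq_coverNumber H
  rw [← hcard]
  exact ARs_mono (isContained_Kst_of_cover S hS)

lemma coverNumber_le_card {W : Type*} [Fintype W] (H : SimpleGraph W) :
    coverNumber H ≤ Fintype.card W := by
  obtain ⟨S, hcard, -⟩ := exists_cover_card_eq_coverNumber H
  exact hcard ▸ S.card_le_univ

lemma ArrowsTo.ARs_Kst_le {m s : ℕ}
    (h : ArrowsTo (⊤ : SimpleGraph (Fin m)) (⊤ : SimpleGraph (Fin s))) (hs : 0 < s) (t : ℕ) :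
    ARs (Kst s t) ≤ m * (m + s * (s * (s + t))) :=
  (h.Kst_arrowsTo_Kst hs le_rfl).ARs_le_ncard_edgeSet.trans (ncard_edgeSet_Kst_le _ _)

lemma one_le_cube_div_log {x : ℝ} (hx : 2 ≤ x) : 1 ≤ x ^ 3 / Real.log x := by
  rw [one_le_div (Real.log_pos (by linarith))]
  calc Real.log x ≤ x := Real.log_le_self (by linarith)
    _ ≤ x ^ 3 := le_self_pow₀ (by linarith) (by norm_num)

lemma exists_top_arrowsTo_top {s : ℕ} (hs : 2 ≤ s) : ∃ m : ℕ,
    ArrowsTo (⊤ : SimpleGraph (Fin m)) (⊤ : SimpleGraph (Fin s)) ∧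
      (m : ℝ) ≤ 2 * 3072 ^ 44 * (s ^ 3 / Real.log s) := by
  have hs' : (2 : ℝ) ≤ s := by exact_mod_cast hs
  set x : ℝ := 3072 ^ 44 * (s ^ 3 / Real.log s)
  have hx₁ : 1 ≤ x := one_le_mul_of_one_le_of_one_le (by norm_num) (one_le_cube_div_log hs')
  refine ⟨⌈x⌉₊, top_arrowsTo_top (by rwa [Fintype.card_fin]) ?_, ?_⟩
  · simpa only [Fintype.card_fin] using Nat.le_ceil x
  · have := (Nat.ceil_lt_add_one (zero_le_one.trans hx₁)).le
    linarith

theorem exists_ARs_Kst_le : ∃ c : ℝ, 0 < c ∧ ∀ s t : ℕ, 2 ≤ s → (ARs (Kst s t) : ℝ) ≤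
    c * (s + t) * s ^ 5 / Real.log s + c * s ^ 6 / Real.log s := by
  obtain ⟨C, hC, hclique⟩ : ∃ C : ℝ, 1 ≤ C ∧ ∀ s : ℕ, 2 ≤ s → ∃ m : ℕ,
      ArrowsTo (⊤ : SimpleGraph (Fin m)) (⊤ : SimpleGraph (Fin s)) ∧
        (m : ℝ) ≤ C * (s ^ 3 / Real.log s) :=
    ⟨_, by norm_num, fun s hs => exists_top_arrowsTo_top hs⟩
  refine ⟨2 * C ^ 2, by positivity, fun s t hs => ?_⟩
  obtain ⟨m, harrow, hm⟩ := hclique s hs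
  have hs' : (2 : ℝ) ≤ s := by exact_mod_cast hs
  have hlog : 1 / 2 ≤ Real.log s := by
    linarith [Real.log_two_gt_d9, Real.log_le_log two_pos hs']
  have hinv : 1 / Real.log s ≤ 2 := by
    rw [div_le_iff₀ (by linarith)]
    linarith
  have : 0 < Real.log s := by linarith
  have hCsq : C ≤ 2 * C ^ 2 := by nlinarith
  calc (ARs (Kst s t) : ℝ) ≤ m * (m + s * (s * (s + t))) := by
        exact_mod_cast harrow.ARs_Kst_le (by omega) t
    _ ≤ C * (s ^ 3 / Real.log s) * (C * (s ^ 3 / Real.log s) + s * (s * (s + t))) := by gcongr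
    _ = C * ((s + t) * s ^ 5 / Real.log s) +
          C ^ 2 * (s ^ 6 / Real.log s) * (1 / Real.log s) := by ring
    _ ≤ 2 * C ^ 2 * ((s + t) * s ^ 5 / Real.log s) + C ^ 2 * (s ^ 6 / Real.log s) * 2 := by gcongr
    _ = _ := by ring

end SizeAntiRamsey

theorem stmt_11_general.{u} :
    ∃ c : ℝ, 0 < c ∧
      ∀ (W : Type u) [Fintype W] (H : SimpleGraph W), 2 ≤ coverNumber H →
        ARs H ≤ ARs (Kst (coverNumber H) (Fintype.card W - coverNumber H)) ∧
        (ARs (Kst (coverNumber H) (Fintype.card W - coverNumber H)) : ℝ) ≤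
          c * (Fintype.card W : ℝ) * (coverNumber H : ℝ) ^ 5 / Real.log (coverNumber H) +
          c * (coverNumber H : ℝ) ^ 6 / Real.log (coverNumber H) := by
  obtain ⟨c, hc, hle⟩ := exists_ARs_Kst_le
  refine ⟨c, hc, fun W _ H hτ => ⟨ARs_le_ARs_Kst_coverNumber H, ?_⟩⟩
  have hcard : (coverNumber H + (Fintype.card W - coverNumber H : ℕ) : ℝ) = Fintype.card W := by
    exact_mod_cast Nat.add_sub_cancel' (coverNumber_le_card H)
  rw [← hcard]
  exact hle _ _ hτ

theorem stmt_11 :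
    ∃ c : ℝ, 0 < c ∧
      ∀ (W : Type) [Fintype W] (H : SimpleGraph W),
        (∀ v : W, ∃ w, H.Adj v w) → 2 ≤ coverNumber H →
        ARs H ≤ ARs (Kst (coverNumber H) (Fintype.card W - coverNumber H)) ∧
        (ARs (Kst (coverNumber H) (Fintype.card W - coverNumber H)) : ℝ) ≤
          c * (Fintype.card W : ℝ) * (coverNumber H : ℝ) ^ 5 / Real.log (coverNumber H) +
          c * (coverNumber H : ℝ) ^ 6 / Real.log (coverNumber H) := by
  obtain ⟨c, hc, h⟩ := stmt_11_general
  exact ⟨c, hc, fun W _ H _ hτ => h W H hτ⟩
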